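/- arXiv:0901.3599 — 3 statements merged into one kernel-verified Lean document; each statement's English description precedes it below -/
import Mathlib

section
/- Let v ∈ Λ7♯ be any vector with ‖v‖² = 3 whose coset v + Λ7 has minimal norm 3 (the minimum of ‖x‖² over the coset is 3), and set O7 = ⟨Λ7, v⟩. Then every integral lattice L in ℝ^7 with Λ7 ⊆ L is isometric (via a linear isometry of ℝ^7) to one of the eleven lattices: Λ7; O7; ⟨Λ7, ε1⟩; ⟨Λ7, ε2+ε4⟩; ⟨O7, ε1⟩; ⟨Λ7, ε1, ε2⟩; ⟨Λ7, ε1+ε3, ε2+ε4⟩; ⟨Λ7, ε1, ε2, ε4⟩; ⟨Λ7, ε1, ε2, ε1+ε3⟩; D7 = {x ∈ ℤ^7 : x1+⋯+x7 even}; and ℤ^7. -/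
noncomputable section

open scoped RealInnerProductSpace

/-- `ℝ^n` with the standard inner product. -/
abbrev E (n : ℕ) := EuclideanSpace ℝ (Fin n)

/-- The standard basis vector `ε i`. -/
def εv {n : ℕ} (i : Fin n) : E n := EuclideanSpace.single i 1

/-- The vector of `ℝ^n` with the given coordinates. -/
def vec {n : ℕ} (x : Fin n → ℝ) : E n := (WithLp.equiv 2 (Fin n → ℝ)).symm x

/-- The vector of `ℝ^n` with the given integer coordinates. -/
def intVec {n : ℕ} (x : Fin n → ℤ) : E n := (WithLp.equiv 2 (Fin n → ℝ)).symm fun i => (x i : ℝ)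

/-- A lattice is integral if all pairwise inner products of its elements are integers. -/
def LatticeIsIntegral {n : ℕ} (L : Submodule ℤ (E n)) : Prop :=
  ∀ x ∈ L, ∀ y ∈ L, ∃ k : ℤ, ⟪x, y⟫ = (k : ℝ)

/-- Two lattices are isometric if a linear isometry of the ambient space carries
one onto the other. -/
def IsometricLattices {n : ℕ} (L M : Submodule ℤ (E n)) : Prop :=
  ∃ g : E n ≃ₗᵢ[ℝ] E n, g '' (L : Set (E n)) = (M : Set (E n))

/-- The dual lattice `Λ♯ = {x : ⟪x,y⟫ ∈ ℤ for all y ∈ Λ}`. -/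
def dualLattice {n : ℕ} (Λ : Submodule ℤ (E n)) : Submodule ℤ (E n) where
  carrier := {x | ∀ y ∈ Λ, ∃ k : ℤ, ⟪x, y⟫ = (k : ℝ)}
  zero_mem' := fun y _ => ⟨0, by simp⟩
  add_mem' := by
    intro a b ha hb y hy
    obtain ⟨k, hk⟩ := ha y hy
    obtain ⟨l, hl⟩ := hb y hy
    exact ⟨k + l, by rw [inner_add_left, hk, hl]; push_cast; ring⟩
  smul_mem' := by
    intro c x hx y hy
    obtain ⟨k, hk⟩ := hx y hy
    refine ⟨c * k, ?_⟩
    rw [← Int.cast_smul_eq_zsmul ℝ c x, real_inner_smul_left, hk]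
    push_cast
    ring

/-- The quotient abelian group `Λ♯/Λ`. -/
abbrev DualQuot {n : ℕ} (Λ : Submodule ℤ (E n)) :=
  (dualLattice Λ) ⧸ (Λ.comap (dualLattice Λ).subtype)

/-- The coset `c ∈ Λ♯/Λ` has minimal norm `m`, i.e. `m` is the minimum of `‖x‖²`
over `x` in the coset `c`. -/
def CosetMinNorm {n : ℕ} (Λ : Submodule ℤ (E n)) (c : DualQuot Λ) (m : ℝ) : Prop :=
  IsLeast {r : ℝ | ∃ x : dualLattice Λ, Submodule.Quotient.mk x = c ∧ r = ‖(x : E n)‖ ^ 2} m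

/-- The binary code `C ⊆ 𝔽₂⁷` spanned by `(1,0,1,1,1,0,0)`, `(0,1,0,1,1,1,0)`,
`(0,0,1,0,1,1,1)`. -/
def code7 : Submodule (ZMod 2) (Fin 7 → ZMod 2) :=
  Submodule.span (ZMod 2)
    {![1, 0, 1, 1, 1, 0, 0], ![0, 1, 0, 1, 1, 1, 0], ![0, 0, 1, 0, 1, 1, 1]}

/-- The laminated lattice `Λ₇ = {x ∈ ℤ⁷ : x mod 2 ∈ C} ≅ √2·E₇`. -/
def Λ7 : Submodule ℤ (E 7) :=
  Submodule.span ℤ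
    {v : E 7 | ∃ x : Fin 7 → ℤ, (fun i => (x i : ZMod 2)) ∈ code7 ∧ v = intVec x}

/-- `D₇ = {x ∈ ℤ⁷ : x1 + ⋯ + x7 even}`. -/
def latD7 : Submodule ℤ (E 7) :=
  Submodule.span ℤ {v : E 7 | ∃ x : Fin 7 → ℤ, Even (∑ i, x i) ∧ v = intVec x}

/-- `ℤ⁷`. -/
def latZ7 : Submodule ℤ (E 7) :=
  Submodule.span ℤ {v : E 7 | ∃ x : Fin 7 → ℤ, v = intVec x}


/-- Binary words of length seven. -/
abbrev F7 := Fin 7 → ZMod 2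

/-- The parity checks of the code. -/
def chk7 (w : F7) : Bool :=
  Nat.beq (((w 0).val + (w 2).val + (w 3).val + (w 4).val) % 2) 0 &&
  Nat.beq (((w 1).val + (w 3).val + (w 4).val + (w 5).val) % 2) 0 &&
  Nat.beq (((w 2).val + (w 4).val + (w 5).val + (w 6).val) % 2) 0 &&
  Nat.beq (((w 0).val + (w 1).val + (w 2).val + (w 3).val + (w 4).val + (w 5).val +
    (w 6).val) % 2) 0

/-- Boolean membership test for the code generated by `code7` and a list of words. -/
def memB7 : List F7 → F7 → Bool
  | [], w => chk7 w
  | x :: l, w => memB7 l w || memB7 l (w + x)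

/-- The code generated by `code7` and a list of words. -/
def codeOf : List F7 → Submodule (ZMod 2) F7
  | [] => code7
  | x :: l => codeOf l ⊔ Submodule.span (ZMod 2) {x}

/-- Generators, modulo the code, of the eleven codes. -/
def gens7 : Fin 11 → List F7
  | 0 => []
  | 1 => [![1, 1, 1, 1, 1, 1, 1]]
  | 2 => [![1, 0, 0, 0, 0, 0, 0]]
  | 3 => [![0, 1, 0, 1, 0, 0, 0]]
  | 4 => [![1, 0, 0, 0, 0, 0, 0], ![1, 1, 1, 1, 1, 1, 1]]
  | 5 => [![1, 0, 0, 0, 0, 0, 0], ![0, 1, 0, 0, 0, 0, 0]]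
  | 6 => [![1, 0, 1, 0, 0, 0, 0], ![0, 1, 0, 1, 0, 0, 0]]
  | 7 => [![1, 0, 0, 0, 0, 0, 0], ![0, 1, 0, 0, 0, 0, 0], ![0, 0, 0, 1, 0, 0, 0]]
  | 8 => [![1, 0, 0, 0, 0, 0, 0], ![0, 1, 0, 0, 0, 0, 0], ![1, 0, 1, 0, 0, 0, 0]]
  | 9 => [![1, 1, 0, 0, 0, 0, 0], ![1, 0, 1, 0, 0, 0, 0], ![1, 0, 0, 1, 0, 0, 0]]
  | 10 => [![1, 0, 0, 0, 0, 0, 0], ![0, 1, 0, 0, 0, 0, 0], ![0, 0, 1, 0, 0, 0, 0], ![1, 1, 1, 1, 1, 1, 1]]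

/-- For each of the eleven codes and each nontrivial coset representative, a coordinate
permutation and the index of the code obtained after adjoining the representative. -/
def tab7 : Fin 11 → List (F7 × (Fin 7 → Fin 7) × Fin 11)
  | 0 => [(![1, 0, 0, 0, 0, 0, 0], ![0, 1, 2, 3, 4, 5, 6], 2),
      (![0, 1, 0, 0, 0, 0, 0], ![1, 0, 2, 3, 6, 5, 4], 2),
      (![0, 0, 1, 0, 0, 0, 0], ![2, 1, 0, 4, 3, 5, 6], 2),
      (![0, 0, 0, 1, 0, 0, 0], ![3, 1, 2, 0, 4, 6, 5], 2),
      (![0, 0, 0, 0, 1, 0, 0], ![4, 1, 3, 2, 0, 5, 6], 2),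
      (![0, 0, 0, 0, 0, 1, 0], ![5, 1, 2, 6, 4, 0, 3], 2),
      (![0, 0, 0, 0, 0, 0, 1], ![6, 1, 2, 5, 4, 3, 0], 2),
      (![1, 1, 0, 0, 0, 0, 0], ![3, 1, 2, 0, 4, 6, 5], 3),
      (![1, 0, 1, 0, 0, 0, 0], ![6, 1, 2, 5, 4, 3, 0], 3),
      (![0, 1, 1, 0, 0, 0, 0], ![4, 1, 3, 2, 0, 5, 6], 3),
      (![1, 0, 0, 1, 0, 0, 0], ![1, 0, 2, 3, 6, 5, 4], 3),
      (![0, 1, 0, 1, 0, 0, 0], ![0, 1, 2, 3, 4, 5, 6], 3),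
      (![0, 0, 1, 1, 0, 0, 0], ![5, 1, 2, 6, 4, 0, 3], 3),
      (![0, 1, 0, 0, 1, 0, 0], ![2, 1, 0, 4, 3, 5, 6], 3),
      (![1, 1, 0, 1, 0, 0, 0], ![0, 1, 2, 3, 4, 5, 6], 1)]
  | 1 => [(![1, 0, 0, 0, 0, 0, 0], ![0, 1, 2, 3, 4, 5, 6], 4),
      (![0, 1, 0, 0, 0, 0, 0], ![1, 0, 2, 3, 6, 5, 4], 4),
      (![0, 0, 1, 0, 0, 0, 0], ![2, 1, 0, 4, 3, 5, 6], 4),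
      (![0, 0, 0, 1, 0, 0, 0], ![3, 1, 2, 0, 4, 6, 5], 4),
      (![0, 0, 0, 0, 1, 0, 0], ![4, 1, 3, 2, 0, 5, 6], 4),
      (![0, 0, 0, 0, 0, 1, 0], ![5, 1, 2, 6, 4, 0, 3], 4),
      (![0, 0, 0, 0, 0, 0, 1], ![6, 1, 2, 5, 4, 3, 0], 4)]
  | 2 => [(![0, 1, 0, 0, 0, 0, 0], ![0, 1, 2, 3, 4, 5, 6], 5),
      (![0, 0, 1, 0, 0, 0, 0], ![0, 2, 1, 6, 4, 5, 3], 5),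
      (![0, 0, 0, 1, 0, 0, 0], ![0, 3, 2, 1, 5, 4, 6], 5),
      (![0, 0, 0, 0, 1, 0, 0], ![0, 4, 2, 5, 1, 3, 6], 5),
      (![0, 0, 0, 0, 0, 1, 0], ![0, 5, 2, 4, 3, 1, 6], 5),
      (![0, 0, 0, 0, 0, 0, 1], ![0, 6, 3, 2, 4, 5, 1], 5),
      (![0, 1, 0, 1, 0, 0, 0], ![0, 1, 2, 3, 4, 5, 6], 4)]
  | 3 => [(![1, 0, 0, 0, 0, 0, 0], ![0, 1, 2, 3, 4, 5, 6], 4),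
      (![0, 1, 0, 0, 0, 0, 0], ![3, 1, 2, 0, 4, 6, 5], 5),
      (![0, 0, 1, 0, 0, 0, 0], ![2, 6, 3, 0, 4, 1, 5], 5),
      (![0, 0, 0, 0, 1, 0, 0], ![4, 5, 2, 0, 3, 6, 1], 5),
      (![1, 1, 0, 0, 0, 0, 0], ![0, 2, 1, 6, 4, 5, 3], 6),
      (![1, 0, 1, 0, 0, 0, 0], ![0, 1, 2, 3, 4, 5, 6], 6),
      (![0, 1, 1, 0, 0, 0, 0], ![0, 1, 4, 3, 2, 6, 5], 6)]
  | 4 => [(![0, 1, 0, 0, 0, 0, 0], ![0, 1, 2, 3, 4, 5, 6], 7),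
      (![0, 0, 1, 0, 0, 0, 0], ![0, 2, 1, 6, 4, 5, 3], 7),
      (![0, 0, 0, 0, 1, 0, 0], ![0, 4, 2, 5, 1, 3, 6], 7)]
  | 5 => [(![0, 0, 1, 0, 0, 0, 0], ![0, 1, 2, 3, 4, 5, 6], 8),
      (![0, 0, 0, 1, 0, 0, 0], ![0, 1, 2, 3, 4, 5, 6], 7),
      (![0, 0, 0, 0, 1, 0, 0], ![0, 1, 4, 3, 2, 6, 5], 8)]
  | 6 => [(![1, 0, 0, 0, 0, 0, 0], ![0, 2, 1, 6, 4, 5, 3], 7),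
      (![0, 1, 0, 0, 0, 0, 0], ![4, 1, 3, 2, 0, 5, 6], 8),
      (![1, 1, 0, 0, 0, 0, 0], ![0, 1, 2, 3, 4, 5, 6], 9)]
  | 7 => [(![0, 0, 1, 0, 0, 0, 0], ![0, 1, 2, 3, 4, 5, 6], 10)]
  | 8 => [(![0, 0, 0, 1, 0, 0, 0], ![0, 1, 2, 3, 4, 5, 6], 10)]
  | 9 => [(![1, 0, 0, 0, 0, 0, 0], ![0, 1, 2, 3, 4, 5, 6], 10)]
  | 10 => []

lemma mem_code7 (w : F7) : w ∈ code7 ↔ chk7 w = true := by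
  unfold code7
  rw [Submodule.mem_span_triple]
  constructor
  · rintro ⟨a, b, c, rfl⟩
    revert a b c
    decide
  · intro h
    refine ⟨w 0, w 1, w 2 - w 0, ?_⟩
    revert w
    decide +kernel

lemma mem_sup_span7 (U : Submodule (ZMod 2) F7) (x w : F7) :
    w ∈ U ⊔ Submodule.span (ZMod 2) {x} ↔ w ∈ U ∨ w + x ∈ U := by
  have hxx : x + x = 0 := by
    funext i; exact CharTwo.add_self_eq_zero _
  rw [Submodule.mem_sup]
  constructor
  · rintro ⟨y, hy, z, hz, rfl⟩
    obtain ⟨a, rfl⟩ := Submodule.mem_span_singleton.1 hz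
    have : a = 0 ∨ a = 1 := by clear hz; revert a; decide
    rcases this with rfl | rfl
    · left; simpa using hy
    · right; rw [one_smul, add_assoc, hxx, add_zero]; exact hy
  · rintro (h | h)
    · exact ⟨w, h, 0, zero_mem _, add_zero _⟩
    · exact ⟨w + x, h, x, Submodule.mem_span_singleton_self x, by rw [add_assoc, hxx, add_zero]⟩

lemma mem_codeOf (l : List F7) (w : F7) : w ∈ codeOf l ↔ memB7 l w = true := by
  induction l generalizing w with
  | nil => exact mem_code7 w
  | cons x l ih => simp only [codeOf, memB7, mem_sup_span7, ih, Bool.or_eq_true]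

/-- Representatives of the words modulo the code. -/
def rep7 (a b c d : Bool) : F7
  | 0 => 0
  | 1 => 0
  | 2 => 0
  | 3 => cond a 1 0
  | 4 => cond b 1 0
  | 5 => cond c 1 0
  | 6 => cond d 1 0

lemma exists_rep7 : ∀ w : F7, ∃ a b c d, chk7 (w + rep7 a b c d) = true := by
  decide +kernel

lemma tab_cover : ∀ j : Fin 11, ∀ a b c d : Bool, memB7 (gens7 j) (rep7 a b c d) = true ∨
    ∃ e ∈ tab7 j, memB7 (gens7 j) (rep7 a b c d + e.1) = true := by
  decide +kernel

lemma tab_inj : ∀ j, (tab7 j).all (fun e => decide (Function.Injective e.2.1)) = true := by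
  decide +kernel

lemma tab_aut : ∀ j, (tab7 j).all (fun e =>
    chk7 (fun i => (![1, 0, 1, 1, 1, 0, 0] : F7) (e.2.1 i)) &&
    chk7 (fun i => (![0, 1, 0, 1, 1, 1, 0] : F7) (e.2.1 i)) &&
    chk7 (fun i => (![0, 0, 1, 0, 1, 1, 1] : F7) (e.2.1 i))) = true := by
  decide +kernel

lemma tab_eq : ∀ j, (tab7 j).all (fun e => decide (∀ a b c d : Bool,
    memB7 (e.1 :: gens7 j) (rep7 a b c d) =
      memB7 (gens7 e.2.2) (fun i => rep7 a b c d (e.2.1 i)))) = true := by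
  decide +kernel

lemma add_self7 (x : F7) : x + x = 0 := by
  funext i; exact CharTwo.add_self_eq_zero _

lemma sup_span_congr7 (U : Submodule (ZMod 2) F7) (x y : F7) (h : x + y ∈ U) :
    U ⊔ Submodule.span (ZMod 2) {x} = U ⊔ Submodule.span (ZMod 2) {y} := by
  ext w
  rw [mem_sup_span7, mem_sup_span7]
  have : w + x ∈ U ↔ w + y ∈ U := by
    have e1 : w + y = (w + x) + (x + y) := by
      rw [add_assoc, ← add_assoc x x y, add_self7, zero_add]
    have e2 : w + x = (w + y) + (x + y) := by
      rw [add_assoc, add_comm x y, ← add_assoc y y x, add_self7, zero_add]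
    constructor
    · intro hw; rw [e1]; exact U.add_mem hw h
    · intro hw; rw [e2]; exact U.add_mem hw h
  rw [this]

/-- Equivalence with one of the eleven codes. -/
def Good7 (U : Submodule (ZMod 2) F7) : Prop :=
  ∃ σ : Fin 7 → Fin 7, Function.Injective σ ∧ ∃ j : Fin 11,
    ∀ w : F7, w ∈ U ↔ (fun i => w (σ i)) ∈ codeOf (gens7 j)

lemma code7_le_codeOf (l : List F7) : code7 ≤ codeOf l := by
  induction l with
  | nil => exact le_rfl
  | cons x l ih => exact ih.trans le_sup_left

lemma mem_iff_of_add_mem (U : Submodule (ZMod 2) F7) (x y : F7) (h : x + y ∈ U) :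
    x ∈ U ↔ y ∈ U :=
  ⟨fun hx => (U.add_mem_iff_right hx).1 h, fun hy => (U.add_mem_iff_left hy).1 h⟩

lemma perm_code7 (j : Fin 11) (e : F7 × (Fin 7 → Fin 7) × Fin 11) (he : e ∈ tab7 j) (w : F7)
    (hw : w ∈ code7) : (fun i => w (e.2.1 i)) ∈ code7 := by
  have h := List.all_eq_true.1 (tab_aut j) e he
  simp only [Bool.and_eq_true] at h
  obtain ⟨⟨h1, h2⟩, h3⟩ := h
  rw [← mem_code7] at h1 h2 h3
  unfold code7 at hw
  rw [Submodule.mem_span_triple] at hw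
  obtain ⟨a, b, c, rfl⟩ := hw
  exact code7.add_mem (code7.add_mem (code7.smul_mem a h1) (code7.smul_mem b h2))
    (code7.smul_mem c h3)

lemma good_step_rep (j : Fin 11) (y : F7) :
    Good7 (codeOf (gens7 j) ⊔ Submodule.span (ZMod 2) {y}) := by
  obtain ⟨a, b, c, d, hr⟩ := exists_rep7 y
  rw [← mem_code7] at hr
  rw [sup_span_congr7 _ _ _ (code7_le_codeOf _ hr)]
  rcases tab_cover j a b c d with h | ⟨e, he, h⟩
  · refine ⟨id, Function.injective_id, j, fun w => ?_⟩
    rw [← mem_codeOf] at h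
    rw [sup_eq_left.2 ((Submodule.span_singleton_le_iff_mem _ _).2 h)]
    rfl
  · rw [← mem_codeOf] at h
    rw [sup_span_congr7 _ _ _ h]
    have h1 := List.all_eq_true.1 (tab_inj j) e he
    have h2 := List.all_eq_true.1 (tab_eq j) e he
    rw [decide_eq_true_iff] at h1 h2
    refine ⟨e.2.1, h1, e.2.2, fun w => ?_⟩
    obtain ⟨a, b, c, d, hw⟩ := exists_rep7 w
    rw [← mem_code7] at hw
    have h3 := h2 a b c d
    change _ ∈ codeOf (e.1 :: gens7 j) ↔ _
    rw [mem_iff_of_add_mem _ _ _ (code7_le_codeOf (e.1 :: gens7 j) hw),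
      mem_iff_of_add_mem _ _ _ (code7_le_codeOf (gens7 e.2.2) (perm_code7 j e he _ hw)),
      mem_codeOf, mem_codeOf, ← h3]

lemma good_step (U : Submodule (ZMod 2) F7) (hU : Good7 U) (x : F7) :
    Good7 (U ⊔ Submodule.span (ZMod 2) {x}) := by
  obtain ⟨σ, hσ, j, h⟩ := hU
  obtain ⟨τ, hτ, k, h'⟩ := good_step_rep j (fun i => x (σ i))
  refine ⟨σ ∘ τ, hσ.comp hτ, k, fun w => ?_⟩
  have := h' (fun i => w (σ i))
  rw [mem_sup_span7] at this
  rw [mem_sup_span7, h, h]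
  exact this

lemma good_all (U : Submodule (ZMod 2) F7) (hU : code7 ≤ U) : Good7 U := by
  have key : ∀ s : Finset F7, Good7 (code7 ⊔ Submodule.span (ZMod 2) (s : Set F7)) := by
    intro s
    induction s using Finset.induction_on with
    | empty =>
      refine ⟨id, Function.injective_id, 0, fun w => ?_⟩
      simp only [Finset.coe_empty, Submodule.span_empty, sup_bot_eq]
      rfl
    | insert a s _ ih =>
      have := good_step _ ih a
      rwa [sup_assoc, sup_comm (Submodule.span (ZMod 2) (s : Set F7)), ← Submodule.span_union,
        Set.singleton_union, ← Finset.coe_insert] at this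
  classical
  have h := key (Set.toFinite (U : Set F7)).toFinset
  rwa [Set.Finite.coe_toFinset, Submodule.span_eq, sup_eq_right.2 hU] at h

lemma cast_two (k : ℤ) : (k : ZMod 2) = 0 ↔ (2 : ℤ) ∣ k :=
  ZMod.intCast_zmod_eq_zero_iff_dvd k 2

/-- Reduction modulo two. -/
def red7 (x : Fin 7 → ℤ) : F7 := fun i => (x i : ZMod 2)

lemma red7_add (x y : Fin 7 → ℤ) : red7 (x + y) = red7 x + red7 y := by
  funext i; simp [red7]

lemma red7_smul (k : ℤ) (x : Fin 7 → ℤ) : red7 (k • x) = (k : ZMod 2) • red7 x := by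
  funext i; simp [red7]

lemma red7_sub (x y : Fin 7 → ℤ) : red7 (x - y) = red7 x + red7 y := by
  funext i; simp [red7, CharTwo.sub_eq_add]

lemma red7_two (x : Fin 7 → ℤ) : red7 ((2 : ℤ) • x) = 0 := by
  rw [red7_smul]
  have : ((2 : ℤ) : ZMod 2) = 0 := by decide
  rw [this, zero_smul]

lemma red7_surj (w : F7) : ∃ x, red7 x = w :=
  ⟨fun i => ((w i).val : ℤ), by funext i; simp [red7]⟩

lemma red7_eq_zero (x : Fin 7 → ℤ) (h : red7 x = 0) : ∃ y, x = (2 : ℤ) • y := by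
  have : ∀ i, ∃ k, x i = 2 * k := fun i => by
    have := congrFun h i
    simp only [red7, Pi.zero_apply] at this
    exact (ZMod.intCast_zmod_eq_zero_iff_dvd (x i) 2).1 this
  choose y hy using this
  exact ⟨y, by funext i; simp [hy]⟩

@[simp] lemma intVec_apply {n : ℕ} (x : Fin n → ℤ) (i : Fin n) : intVec x i = (x i : ℝ) := rfl

lemma intVec_add {n : ℕ} (x y : Fin n → ℤ) : intVec (x + y) = intVec x + intVec y := by
  ext i; simp

lemma intVec_sub {n : ℕ} (x y : Fin n → ℤ) : intVec (x - y) = intVec x - intVec y := by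
  ext i; simp

lemma intVec_smul {n : ℕ} (k : ℤ) (x : Fin n → ℤ) : intVec (k • x) = k • intVec x := by
  ext i
  rw [← Int.cast_smul_eq_zsmul ℝ k (intVec x)]
  simp

lemma intVec_zero {n : ℕ} : intVec (0 : Fin n → ℤ) = 0 := by
  ext i; simp

/-- The lattice of a code (construction A). -/
def lat7 (U : Submodule (ZMod 2) F7) : Submodule ℤ (E 7) where
  carrier := {v | ∃ x : Fin 7 → ℤ, red7 x ∈ U ∧ v = intVec x}
  zero_mem' := ⟨0, by
    have : red7 0 = 0 := by funext i; simp [red7]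
    rw [this]; exact U.zero_mem, intVec_zero.symm⟩
  add_mem' := by
    rintro _ _ ⟨x, hx, rfl⟩ ⟨y, hy, rfl⟩
    exact ⟨x + y, by rw [red7_add]; exact U.add_mem hx hy, (intVec_add x y).symm⟩
  smul_mem' := by
    rintro c _ ⟨x, hx, rfl⟩
    exact ⟨c • x, by rw [red7_smul]; exact U.smul_mem _ hx, (intVec_smul c x).symm⟩

lemma mem_lat7 (U : Submodule (ZMod 2) F7) (v : E 7) :
    v ∈ lat7 U ↔ ∃ x : Fin 7 → ℤ, red7 x ∈ U ∧ v = intVec x := Iff.rfl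

lemma Λ7_eq : Λ7 = lat7 code7 := by
  apply le_antisymm
  · exact Submodule.span_le.2 (fun v h => h)
  · intro v h
    exact Submodule.subset_span h

lemma latZ7_eq : latZ7 = lat7 ⊤ := by
  apply le_antisymm
  · exact Submodule.span_le.2 (fun v ⟨x, hx⟩ => ⟨x, trivial, hx⟩)
  · rintro v ⟨x, _, hx⟩
    exact Submodule.subset_span ⟨x, hx⟩

lemma lat7_sup (U : Submodule (ZMod 2) F7) (a : Fin 7 → ℤ) :
    lat7 U ⊔ Submodule.span ℤ {intVec a} = lat7 (U ⊔ Submodule.span (ZMod 2) {red7 a}) := by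
  apply le_antisymm
  · apply sup_le
    · rintro v ⟨x, hx, rfl⟩
      exact ⟨x, Submodule.mem_sup_left hx, rfl⟩
    · rw [Submodule.span_singleton_le_iff_mem]
      exact ⟨a, Submodule.mem_sup_right (Submodule.mem_span_singleton_self _), rfl⟩
  · rintro v ⟨x, hx, rfl⟩
    rw [mem_sup_span7] at hx
    rcases hx with hx | hx
    · exact Submodule.mem_sup_left ⟨x, hx, rfl⟩
    · rw [← red7_sub] at hx
      rw [Submodule.mem_sup]
      exact ⟨intVec (x - a), ⟨x - a, hx, rfl⟩, intVec a, Submodule.mem_span_singleton_self _,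
        by rw [← intVec_add]; simp⟩

lemma lat7_codeOf_sup (l : List F7) (a : Fin 7 → ℤ) :
    lat7 (codeOf l) ⊔ Submodule.span ℤ {intVec a} = lat7 (codeOf (red7 a :: l)) :=
  lat7_sup _ _

/-- Image of a lattice under a linear isometry. -/
def mapLat (g : E 7 ≃ₗᵢ[ℝ] E 7) (L : Submodule ℤ (E 7)) : Submodule ℤ (E 7) :=
  L.map (g.toLinearEquiv.toLinearMap.restrictScalars ℤ)

lemma mem_mapLat (g : E 7 ≃ₗᵢ[ℝ] E 7) (L : Submodule ℤ (E 7)) (v : E 7) :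
    v ∈ mapLat g L ↔ ∃ x ∈ L, g x = v := Iff.rfl

lemma isometric_of_map_map (g h : E 7 ≃ₗᵢ[ℝ] E 7) (L M : Submodule ℤ (E 7))
    (H : mapLat h (mapLat g L) = M) : IsometricLattices L M := by
  refine ⟨g.trans h, ?_⟩
  ext v
  rw [← H]
  constructor
  · rintro ⟨x, hx, rfl⟩
    exact ⟨g x, ⟨x, hx, rfl⟩, rfl⟩
  · rintro ⟨_, ⟨x, hx, rfl⟩, rfl⟩
    exact ⟨x, hx, rfl⟩

/-- The code of a lattice lying between `Λ7` and `ℤ⁷`. -/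
lemma exists_code (L : Submodule ℤ (E 7)) (h1 : Λ7 ≤ L) (h2 : L ≤ latZ7) :
    ∃ U : Submodule (ZMod 2) F7, code7 ≤ U ∧ L = lat7 U := by
  have hk : ∀ x y : Fin 7 → ℤ, red7 x = red7 y → intVec x ∈ L → intVec y ∈ L := by
    intro x y hxy hx
    have : intVec y = intVec x + intVec (y - x) := by rw [← intVec_add]; simp
    rw [this]
    refine L.add_mem hx (h1 ?_)
    rw [Λ7_eq]
    refine ⟨y - x, ?_, rfl⟩
    rw [red7_sub, hxy, add_self7]
    exact code7.zero_mem
  let U : Submodule (ZMod 2) F7 :=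
    { carrier := {w | ∃ x, red7 x = w ∧ intVec x ∈ L}
      zero_mem' := ⟨0, by funext i; simp [red7], by rw [intVec_zero]; exact L.zero_mem⟩
      add_mem' := by
        rintro _ _ ⟨x, rfl, hx⟩ ⟨y, rfl, hy⟩
        exact ⟨x + y, red7_add x y, by rw [intVec_add]; exact L.add_mem hx hy⟩
      smul_mem' := by
        rintro c _ ⟨x, rfl, hx⟩
        refine ⟨(c.val : ℤ) • x, ?_, by rw [intVec_smul]; exact L.smul_mem _ hx⟩
        rw [red7_smul]; simp }
  refine ⟨U, ?_, ?_⟩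
  · intro w hw
    obtain ⟨x, rfl⟩ := red7_surj w
    refine ⟨x, rfl, h1 ?_⟩
    rw [Λ7_eq]
    exact ⟨x, hw, rfl⟩
  · apply le_antisymm
    · intro v hv
      have := h2 hv
      rw [latZ7_eq] at this
      obtain ⟨x, _, rfl⟩ := this
      exact ⟨x, ⟨x, rfl, hv⟩, rfl⟩
    · rintro v ⟨x, ⟨y, hy, hyL⟩, rfl⟩
      exact hk y x hy hyL

lemma classify_sub (L : Submodule ℤ (E 7)) (h1 : Λ7 ≤ L) (h2 : L ≤ latZ7) :
    ∃ g : E 7 ≃ₗᵢ[ℝ] E 7, ∃ j : Fin 11, mapLat g L = lat7 (codeOf (gens7 j)) := by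
  obtain ⟨U, hU, rfl⟩ := exists_code L h1 h2
  obtain ⟨σ, hσ, j, h⟩ := good_all U hU
  let e : Fin 7 ≃ Fin 7 := Equiv.ofBijective σ (Finite.injective_iff_bijective.1 hσ)
  have key : ∀ x : Fin 7 → ℤ,
      LinearIsometryEquiv.piLpCongrLeft 2 ℝ ℝ e.symm (intVec x) = intVec (fun i => x (σ i)) := by
    intro x
    ext i
    rw [LinearIsometryEquiv.piLpCongrLeft_apply]
    rfl
  refine ⟨LinearIsometryEquiv.piLpCongrLeft 2 ℝ ℝ e.symm, j, ?_⟩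
  ext v
  rw [mem_mapLat]
  constructor
  · rintro ⟨_, ⟨x, hx, rfl⟩, rfl⟩
    exact ⟨fun i => x (σ i), (h (red7 x)).1 hx, key x⟩
  · rintro ⟨x, hx, rfl⟩
    have hx' : x = fun i => (fun k => x (e.symm k)) (σ i) := by
      funext i
      exact congrArg x (e.symm_apply_apply i).symm
    refine ⟨intVec (fun k => x (e.symm k)), ⟨_, ?_, rfl⟩, ?_⟩
    · rw [h]
      rw [hx'] at hx
      exact hx
    · rw [key, ← hx']

lemma εv_eq (i : Fin 7) : εv i = intVec (Pi.single i 1) := by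
  ext k
  by_cases h : k = i
  · subst h; simp [εv]
  · simp [εv, h]

lemma sup_span_pair (M : Submodule ℤ (E 7)) (a b : E 7) :
    M ⊔ Submodule.span ℤ {a, b} = (M ⊔ Submodule.span ℤ {b}) ⊔ Submodule.span ℤ {a} := by
  rw [Submodule.span_insert, sup_assoc, sup_comm (Submodule.span ℤ {a})]

lemma sup_span_triple (M : Submodule ℤ (E 7)) (a b c : E 7) :
    M ⊔ Submodule.span ℤ {a, b, c} =
      ((M ⊔ Submodule.span ℤ {c}) ⊔ Submodule.span ℤ {b}) ⊔ Submodule.span ℤ {a} := by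
  rw [Submodule.span_insert, sup_comm (Submodule.span ℤ {a}), ← sup_assoc, sup_span_pair]

lemma Λ7_eq' : Λ7 = lat7 (codeOf []) := Λ7_eq

lemma lat_id2 : lat7 (codeOf (gens7 2)) = Λ7 ⊔ Submodule.span ℤ {εv 0} := by
  rw [Λ7_eq', εv_eq, lat7_codeOf_sup]
  exact congrArg (fun l => lat7 (codeOf l)) (by decide)

lemma lat_id3 : lat7 (codeOf (gens7 3)) = Λ7 ⊔ Submodule.span ℤ {εv 1 + εv 3} := by
  rw [Λ7_eq', εv_eq, εv_eq, ← intVec_add, lat7_codeOf_sup]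
  exact congrArg (fun l => lat7 (codeOf l)) (by decide)

lemma lat_id5 : lat7 (codeOf (gens7 5)) = Λ7 ⊔ Submodule.span ℤ {εv 0, εv 1} := by
  rw [Λ7_eq', sup_span_pair, εv_eq, εv_eq, lat7_codeOf_sup, lat7_codeOf_sup]
  exact congrArg (fun l => lat7 (codeOf l)) (by decide)

lemma lat_id6 : lat7 (codeOf (gens7 6)) =
    Λ7 ⊔ Submodule.span ℤ {εv 0 + εv 2, εv 1 + εv 3} := by
  rw [Λ7_eq', sup_span_pair, εv_eq, εv_eq, εv_eq, εv_eq, ← intVec_add, ← intVec_add,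
    lat7_codeOf_sup, lat7_codeOf_sup]
  exact congrArg (fun l => lat7 (codeOf l)) (by decide)

lemma lat_id7 : lat7 (codeOf (gens7 7)) = Λ7 ⊔ Submodule.span ℤ {εv 0, εv 1, εv 3} := by
  rw [Λ7_eq', sup_span_triple, εv_eq, εv_eq, εv_eq, lat7_codeOf_sup, lat7_codeOf_sup,
    lat7_codeOf_sup]
  exact congrArg (fun l => lat7 (codeOf l)) (by decide)

lemma lat_id8 : lat7 (codeOf (gens7 8)) =
    Λ7 ⊔ Submodule.span ℤ {εv 0, εv 1, εv 0 + εv 2} := by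
  rw [Λ7_eq', sup_span_triple, εv_eq, εv_eq, εv_eq, ← intVec_add, lat7_codeOf_sup,
    lat7_codeOf_sup, lat7_codeOf_sup]
  exact congrArg (fun l => lat7 (codeOf l)) (by decide)

lemma rep9 : ∀ w : F7, memB7 (gens7 9) w = true ↔ ∑ i, w i = 0 := by
  decide +kernel

lemma rep10 : ∀ w : F7, memB7 (gens7 10) w = true := by
  decide +kernel

lemma lat_id9 : lat7 (codeOf (gens7 9)) = latD7 := by
  have key : ∀ x : Fin 7 → ℤ, red7 x ∈ codeOf (gens7 9) ↔ Even (∑ i, x i) := by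
    intro x
    rw [mem_codeOf, rep9, even_iff_two_dvd]
    have := ZMod.intCast_zmod_eq_zero_iff_dvd (∑ i, x i) 2
    rw [Int.cast_sum] at this
    exact this
  apply le_antisymm
  · rintro v ⟨x, hx, rfl⟩
    exact Submodule.subset_span ⟨x, (key x).1 hx, rfl⟩
  · refine Submodule.span_le.2 ?_
    rintro v ⟨x, hx, rfl⟩
    exact ⟨x, (key x).2 hx, rfl⟩

lemma lat_id10 : lat7 (codeOf (gens7 10)) = latZ7 := by
  rw [latZ7_eq]
  congr 1
  exact eq_top_iff.2 fun w _ => (mem_codeOf _ _).2 (rep10 w)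

/-- The all-ones word. -/
def one7 : F7 := ![1, 1, 1, 1, 1, 1, 1]

lemma lat_id1 (a : Fin 7 → ℤ) (h : red7 a + one7 ∈ code7) :
    lat7 (codeOf (gens7 1)) = Λ7 ⊔ Submodule.span ℤ {intVec a} := by
  rw [Λ7_eq', lat7_codeOf_sup]
  exact congrArg lat7 (sup_span_congr7 code7 _ _ h).symm

lemma lat_id4 (a : Fin 7 → ℤ) (h : red7 a + one7 ∈ code7) :
    lat7 (codeOf (gens7 4)) =
      (Λ7 ⊔ Submodule.span ℤ {intVec a}) ⊔ Submodule.span ℤ {εv 0} := by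
  rw [← lat_id1 a h, εv_eq, lat7_codeOf_sup]
  exact congrArg (fun l => lat7 (codeOf l)) (by decide)

/-- Half of an integral vector. -/
def half7 (a : Fin 7 → ℤ) : E 7 := (1 / 2 : ℝ) • intVec a

lemma inner_half7 (a b : Fin 7 → ℤ) :
    ⟪half7 a, half7 b⟫ = ((dotProduct a b : ℤ) : ℝ) / 4 := by
  unfold half7
  rw [real_inner_smul_left, real_inner_smul_right, PiLp.inner_apply, dotProduct]
  push_cast
  have : ∀ i, ⟪(intVec a) i, (intVec b) i⟫ = (a i : ℝ) * (b i : ℝ) := fun i => by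
    simp [mul_comm]
  simp only [this]
  ring

lemma half7_add (a b : Fin 7 → ℤ) : half7 (a + b) = half7 a + half7 b := by
  simp [half7, intVec_add]

lemma half7_sub (a b : Fin 7 → ℤ) : half7 (a - b) = half7 a - half7 b := by
  simp [half7, intVec_sub, smul_sub]

lemma half7_smul (k : ℤ) (a : Fin 7 → ℤ) : half7 (k • a) = k • half7 a := by
  rw [half7, intVec_smul, smul_comm]; rfl

lemma half7_two (a : Fin 7 → ℤ) : half7 ((2 : ℤ) • a) = intVec a := by
  ext i
  simp [half7]

lemma half7_inj {a b : Fin 7 → ℤ} (h : half7 a = half7 b) : a = b := by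
  funext i
  have := congrArg (fun v : E 7 => v i) h
  simpa [half7] using this

lemma mem_Λ7_half (a : Fin 7 → ℤ) (h : red7 a ∈ code7) : half7 ((2 : ℤ) • a) ∈ Λ7 := by
  rw [half7_two, Λ7_eq]
  exact ⟨a, h, rfl⟩

lemma exists_half (x : E 7) (hx : x ∈ dualLattice Λ7) (n : ℤ) (hn : ‖x‖ ^ 2 = (n : ℝ)) :
    ∃ a, x = half7 a ∧ red7 a ∈ code7 := by
  have h1 : ∀ i, ∃ k : ℤ, 2 * x i = (k : ℝ) := by
    intro i
    obtain ⟨k, hk⟩ := hx (intVec ((2 : ℤ) • Pi.single i 1)) (by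
      rw [Λ7_eq]
      exact ⟨_, by rw [red7_two]; exact code7.zero_mem, rfl⟩)
    refine ⟨k, ?_⟩
    rw [← hk, PiLp.inner_apply, Finset.sum_eq_single i]
    · simp
    · intro j _ hj; simp [hj]
    · simp
  choose a ha using h1
  have hxa : x = half7 a := by
    ext i
    simp [half7, ← ha]
  refine ⟨a, hxa, ?_⟩
  have h2 : ∀ c : Fin 7 → ℤ, red7 c ∈ code7 → (2 : ℤ) ∣ dotProduct a c := by
    intro c hc
    obtain ⟨k, hk⟩ := hx _ (mem_Λ7_half c hc)
    rw [hxa, inner_half7, dotProduct_smul, smul_eq_mul] at hk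
    refine ⟨k, ?_⟩
    have : (((2 : ℤ) * dotProduct a c : ℤ) : ℝ) = ((4 * k : ℤ) : ℝ) := by
      rw [div_eq_iff (by norm_num)] at hk
      rw [hk]; push_cast; ring
    have := Int.cast_injective this
    omega
  have h3 : dotProduct a a = 4 * n := by
    rw [← real_inner_self_eq_norm_sq, hxa, inner_half7] at hn
    have : ((dotProduct a a : ℤ) : ℝ) = ((4 * n : ℤ) : ℝ) := by
      push_cast; linarith
    exact Int.cast_injective this
  have g1 := h2 ![1, 0, 1, 1, 1, 0, 0] (by rw [mem_code7]; decide)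
  have g2 := h2 ![0, 1, 0, 1, 1, 1, 0] (by rw [mem_code7]; decide)
  have g3 := h2 ![0, 0, 1, 0, 1, 1, 1] (by rw [mem_code7]; decide)
  have h4 : ((dotProduct a a : ℤ) : ZMod 2) = 0 := by
    rw [h3, ZMod.intCast_zmod_eq_zero_iff_dvd]
    exact ⟨2 * n, by push_cast; ring⟩
  replace g1 := (ZMod.intCast_zmod_eq_zero_iff_dvd _ 2).2 g1
  replace g2 := (ZMod.intCast_zmod_eq_zero_iff_dvd _ 2).2 g2
  replace g3 := (ZMod.intCast_zmod_eq_zero_iff_dvd _ 2).2 g3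
  have fin : ∀ w : F7, w 0 + w 2 + w 3 + w 4 = 0 → w 1 + w 3 + w 4 + w 5 = 0 →
      w 2 + w 4 + w 5 + w 6 = 0 →
      w 0 * w 0 + w 1 * w 1 + w 2 * w 2 + w 3 * w 3 + w 4 * w 4 + w 5 * w 5 + w 6 * w 6 = 0 →
      chk7 w = true := by decide +kernel
  rw [mem_code7]
  simp [dotProduct, Fin.sum_univ_seven] at g1 g2 g3 h4
  exact fin (red7 a) g1 g2 g3 h4

/-- The eight codewords. -/
def cw7 : List F7 :=
  [![0, 0, 0, 0, 0, 0, 0], ![1, 0, 1, 1, 1, 0, 0], ![0, 1, 0, 1, 1, 1, 0], ![0, 0, 1, 0, 1, 1, 1],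
   ![1, 1, 1, 0, 0, 1, 0], ![1, 0, 0, 1, 0, 1, 1], ![0, 1, 1, 1, 0, 0, 1], ![1, 1, 0, 0, 1, 0, 1]]

lemma mem_cw7 : ∀ w : F7, chk7 w = true ↔ w ∈ cw7 := by
  decide +kernel

/-- Four times the least norm contributed by one coordinate. -/
def cost7 (p q : ZMod 2) : ℕ := if p = 0 then (if q = 0 then 0 else 4) else 1

/-- The coset either contains the all-ones vector or a vector of norm at most two. -/
def small7 (p q : F7) : Bool :=
  (decide (p = 0) && chk7 (q + one7)) ||
    cw7.any (fun c => Nat.ble (cost7 (p 0) (q 0 + c 0) + cost7 (p 1) (q 1 + c 1) +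
      cost7 (p 2) (q 2 + c 2) + cost7 (p 3) (q 3 + c 3) + cost7 (p 4) (q 4 + c 4) +
      cost7 (p 5) (q 5 + c 5) + cost7 (p 6) (q 6 + c 6)) 8)

lemma small7_all : cw7.all (fun p => decide (∀ q, small7 p q = true)) = true := by
  decide +kernel

lemma cost7_spec (a z : ℤ) : ∃ t : ℤ, (a + 2 * (z + 2 * t)) ^ 2 =
    cost7 (a : ZMod 2) (((a / 2 : ℤ) : ZMod 2) + (z : ZMod 2)) := by
  unfold cost7
  simp only [← Int.cast_add, cast_two]
  by_cases h1 : (2 : ℤ) ∣ a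
  · rw [if_pos h1]
    by_cases h2 : (2 : ℤ) ∣ a / 2 + z
    · rw [if_pos h2]
      obtain ⟨s, hs⟩ := h2
      refine ⟨-s, ?_⟩
      have : a + 2 * (z + 2 * -s) = 0 := by omega
      rw [this]; norm_num
    · rw [if_neg h2]
      refine ⟨-((a / 2 + z) / 2), ?_⟩
      have : a + 2 * (z + 2 * -((a / 2 + z) / 2)) = 2 := by omega
      rw [this]; norm_num
  · rw [if_neg h1]
    by_cases h2 : (2 : ℤ) ∣ a / 2 + z
    · refine ⟨-((a / 2 + z) / 2), ?_⟩
      have : a + 2 * (z + 2 * -((a / 2 + z) / 2)) = 1 := by omega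
      rw [this]; norm_num
    · refine ⟨-((a / 2 + z) / 2) - 1, ?_⟩
      have : a + 2 * (z + 2 * (-((a / 2 + z) / 2) - 1)) = -1 := by omega
      rw [this]; norm_num

lemma v_form (v : E 7) (hv : v ∈ dualLattice Λ7) (hvnorm : ‖v‖ ^ 2 = 3)
    (hvmin : ∀ y ∈ Λ7, 3 ≤ ‖v + y‖ ^ 2) : ∃ a, v = intVec a ∧ red7 a + one7 ∈ code7 := by
  obtain ⟨a, rfl, ha⟩ := exists_half v hv 3 (by rw [hvnorm]; norm_num)
  have h1 := List.all_eq_true.1 small7_all (red7 a) ((mem_cw7 _).1 ((mem_code7 _).1 ha))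
  rw [decide_eq_true_iff] at h1
  have h2 := h1 (red7 (fun i => a i / 2))
  unfold small7 at h2
  rw [Bool.or_eq_true, Bool.and_eq_true, decide_eq_true_iff, List.any_eq_true] at h2
  rcases h2 with ⟨h2, h3⟩ | ⟨c, hc, hle⟩
  · obtain ⟨b, rfl⟩ := red7_eq_zero a h2
    refine ⟨b, half7_two b, ?_⟩
    rw [mem_code7]
    have : (fun i => ((2 : ℤ) • b) i / 2) = b := by
      funext i
      simp
    rwa [this] at h3
  · exfalso
    obtain ⟨z, rfl⟩ := red7_surj c
    choose t ht using fun i => cost7_spec (a i) (z i)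
    have hz : red7 (z + (2 : ℤ) • t) ∈ code7 := by
      rw [red7_add, red7_two, add_zero, mem_code7, mem_cw7]
      exact hc
    have hm := hvmin _ (mem_Λ7_half _ hz)
    rw [← half7_add, ← real_inner_self_eq_norm_sq, inner_half7] at hm
    have hd : (12 : ℝ) ≤
        ((dotProduct (a + (2 : ℤ) • (z + (2 : ℤ) • t)) (a + (2 : ℤ) • (z + (2 : ℤ) • t)) : ℤ) : ℝ) := by
      linarith
    have hd' : (12 : ℤ) ≤
        dotProduct (a + (2 : ℤ) • (z + (2 : ℤ) • t)) (a + (2 : ℤ) • (z + (2 : ℤ) • t)) := by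
      exact_mod_cast hd
    have hi : ∀ i, (a + (2 : ℤ) • (z + (2 : ℤ) • t)) i * (a + (2 : ℤ) • (z + (2 : ℤ) • t)) i =
        cost7 (red7 a i) (red7 (fun i => a i / 2) i + red7 z i) := by
      intro i
      rw [← sq]
      exact ht i
    simp only [dotProduct, hi, Fin.sum_univ_seven] at hd'
    have := Nat.le_of_ble_eq_true hle
    omega

lemma code7_dot (a m : Fin 7 → ℤ) (ha : red7 a ∈ code7) (hm : red7 m ∈ code7) :
    (2 : ℤ) ∣ dotProduct m a := by
  have key : ∀ p ∈ code7, ∀ q ∈ code7, dotProduct p q = 0 := by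
    intro p hp q hq
    unfold code7 at hp hq
    rw [Submodule.mem_span_triple] at hp hq
    obtain ⟨a, b, c, rfl⟩ := hp
    obtain ⟨d, e, f, rfl⟩ := hq
    revert a b c d e f
    decide +kernel
  have h := key _ hm _ ha
  rw [← cast_two]
  rw [← h]
  simp [dotProduct, red7]

lemma dot_congr (a m b : Fin 7 → ℤ) (h : red7 a = red7 m) :
    (2 : ℤ) ∣ dotProduct a b - dotProduct m b := by
  rw [← sub_dotProduct]
  obtain ⟨y, hy⟩ := red7_eq_zero (a - m) (by rw [red7_sub, h, add_self7])
  rw [hy, smul_dotProduct]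
  exact ⟨_, rfl⟩

lemma exists_root (a : Fin 7 → ℤ) (ha : red7 a ∈ code7) (h0 : red7 a ≠ 0) :
    ∃ m : Fin 7 → ℤ, red7 m = red7 a ∧ dotProduct m m = 4 ∧ ∃ k : ℤ, Odd k ∧
      dotProduct m a = 2 * k := by
  have wt : ∀ w : F7, chk7 w = true → w ≠ 0 → ∑ i, (w i).val * (w i).val = 4 := by
    decide +kernel
  let m : Fin 7 → ℤ := fun i => ((red7 a i).val : ℤ)
  have hm : red7 m = red7 a := by
    funext i; simp [m, red7]
  have hmm : dotProduct m m = 4 := by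
    have := wt _ ((mem_code7 _).1 ha) h0
    simp only [dotProduct, m]
    exact_mod_cast this
  obtain ⟨k, hk⟩ := code7_dot a m ha (hm ▸ ha)
  rcases Int.even_or_odd k with he | ho
  · obtain ⟨i, hi⟩ : ∃ i, red7 a i ≠ 0 := by
      by_contra hcon
      push Not at hcon
      exact h0 (funext hcon)
    have hmi : m i = 1 := by
      have : ∀ z : ZMod 2, z ≠ 0 → z.val = 1 := by decide
      simp only [m]
      rw [this _ hi]; rfl
    refine ⟨m - (2 : ℤ) • Pi.single i 1, ?_, ?_, k - a i, ?_, ?_⟩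
    · rw [red7_sub, red7_two, add_zero, hm]
    · simp only [sub_dotProduct, dotProduct_sub, smul_dotProduct, dotProduct_smul, hmm,
        single_dotProduct, dotProduct_single, smul_eq_mul]
      simp [hmi]
    · refine he.sub_odd ?_
      rw [← Int.not_even_iff_odd, even_iff_two_dvd, ← cast_two]
      exact hi
    · simp only [sub_dotProduct, smul_dotProduct, hk, single_dotProduct, smul_eq_mul]
      ring
  · exact ⟨m, hm, hmm, k, ho, hk⟩

lemma refl_half (m : Fin 7 → ℤ) (hmm : dotProduct m m = 4) (b : Fin 7 → ℤ) (k : ℤ)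
    (hk : dotProduct m b = 2 * k) :
    (Submodule.span ℝ {half7 m}).reflection (half7 b) = half7 (k • m - b) := by
  rw [Submodule.reflection_singleton_apply]
  have h1 : ((‖half7 m‖ : ℝ) : ℝ) ^ 2 = 1 := by
    rw [← real_inner_self_eq_norm_sq, inner_half7, hmm]; norm_num
  rw [half7_sub, half7_smul]
  simp only [RCLike.ofReal_real_eq_id, id_eq]
  rw [h1, inner_half7, hk, div_one, ← Int.cast_smul_eq_zsmul ℝ k, two_smul, ← add_smul]
  congr 2
  push_cast; ring

/-- The code of half-integral parts of a lattice. -/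
def halfCode (L : Submodule ℤ (E 7)) : Set F7 := {w | ∃ a, red7 a = w ∧ half7 a ∈ L}

lemma move_into_Z7 (n : ℕ) : ∀ L : Submodule ℤ (E 7), LatticeIsIntegral L → Λ7 ≤ L →
    (halfCode L).ncard = n →
    ∃ g : E 7 ≃ₗᵢ[ℝ] E 7, Λ7 ≤ mapLat g L ∧ mapLat g L ≤ latZ7 := by
  induction n using Nat.strong_induction_on with
  | _ n ih =>
  intro L hL hΛ hn
  have hform : ∀ x ∈ L, ∃ a, x = half7 a ∧ red7 a ∈ code7 := by
    intro x hx
    obtain ⟨k, hk⟩ := hL x hx x hx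
    exact exists_half x (fun y hy => hL x hx y (hΛ hy)) k (by rw [← real_inner_self_eq_norm_sq, hk])
  by_cases hall : ∀ a, half7 a ∈ L → red7 a = 0
  · refine ⟨LinearIsometryEquiv.refl ℝ _, ?_, ?_⟩
    · intro x hx
      exact ⟨x, hΛ hx, rfl⟩
    · rintro _ ⟨x, hx, rfl⟩
      obtain ⟨a, rfl, -⟩ := hform x hx
      obtain ⟨b, rfl⟩ := red7_eq_zero a (hall a hx)
      rw [latZ7_eq]
      exact ⟨b, trivial, half7_two b⟩
  · push Not at hall
    obtain ⟨a, haL, ha0⟩ := hall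
    have hcode : ∀ b, half7 b ∈ L → red7 b ∈ code7 := by
      intro b hb
      obtain ⟨b', hb', h⟩ := hform _ hb
      rwa [half7_inj hb']
    have haC := hcode a haL
    obtain ⟨m, hma, hmm, ka, hka, hdot⟩ := exists_root a haC ha0
    have hmC : red7 m ∈ code7 := hma ▸ haC
    let g : E 7 ≃ₗᵢ[ℝ] E 7 := (Submodule.span ℝ {half7 m}).reflection
    have hg : ∀ b k, dotProduct m b = 2 * k → g (half7 b) = half7 (k • m - b) :=
      fun b k hk => refl_half m hmm b k hk
    have hgg : ∀ x, g (g x) = x := fun x => Submodule.reflection_reflection _ x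
    -- vectors of `L ∩ ℤ⁷`
    have hint : ∀ b, half7 ((2 : ℤ) • b) ∈ L → (2 : ℤ) ∣ dotProduct m b := by
      intro b hb
      obtain ⟨k, hk⟩ := hL _ haL _ hb
      rw [inner_half7, dotProduct_smul, smul_eq_mul, div_eq_iff (by norm_num)] at hk
      have hk' : 2 * dotProduct a b = k * 4 := by exact_mod_cast hk
      have := dot_congr a m b hma.symm
      omega
    have hgΛ : ∀ x ∈ Λ7, g x ∈ Λ7 := by
      intro x hx
      rw [Λ7_eq] at hx
      obtain ⟨b, hb, rfl⟩ := hx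
      obtain ⟨k, hk⟩ := code7_dot b m hb hmC
      rw [← half7_two, hg _ (2 * k) (by rw [dotProduct_smul, hk, smul_eq_mul])]
      have : (2 * k) • m - (2 : ℤ) • b = (2 : ℤ) • (k • m - b) := by
        rw [smul_sub, smul_smul]
      rw [this]
      refine mem_Λ7_half _ ?_
      rw [red7_sub, red7_smul]
      exact code7.add_mem (code7.smul_mem _ hmC) hb
    have hΛ' : Λ7 ≤ mapLat g L := fun x hx => ⟨g x, hΛ (hgΛ x hx), hgg x⟩
    have hL' : LatticeIsIntegral (mapLat g L) := by
      rintro _ ⟨x, hx, rfl⟩ _ ⟨y, hy, rfl⟩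
      obtain ⟨k, hk⟩ := hL x hx y hy
      exact ⟨k, by rw [← hk]; exact g.inner_map_map x y⟩
    have hsub : halfCode (mapLat g L) ⊂ halfCode L := by
      rw [Set.ssubset_iff_of_subset]
      · refine ⟨red7 a, ⟨a, rfl, haL⟩, ?_⟩
        rintro ⟨e, he, ⟨x, hx, hxe⟩⟩
        obtain ⟨b, rfl, hb⟩ := hform x hx
        obtain ⟨k, hk⟩ := code7_dot b m hb hmC
        have hxe' : half7 (k • m - b) = half7 e := by rw [← hg b k hk]; exact hxe
        have hxe2 := half7_inj hxe'
        rw [← hxe2, red7_sub, red7_smul, hma] at he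
        rcases Int.even_or_odd k with hev | hod
        · have hk0 : (k : ZMod 2) = 0 := by
            rw [ZMod.intCast_zmod_eq_zero_iff_dvd]; exact even_iff_two_dvd.1 hev
          rw [hk0, zero_smul, zero_add] at he
          obtain ⟨y, hy⟩ := red7_eq_zero (b - a) (by rw [red7_sub, he, add_self7])
          have hyL := hint y (by rw [← hy, half7_sub]; exact L.sub_mem hx haL)
          have : dotProduct m (b - a) = 2 * dotProduct m y := by
            rw [hy, dotProduct_smul, smul_eq_mul]
          rw [dotProduct_sub, hk, hdot] at this
          obtain ⟨r, hr⟩ := hev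
          obtain ⟨s, hs⟩ := hka
          omega
        · have hk1 : (k : ZMod 2) = 1 := by
            obtain ⟨r, rfl⟩ := hod
            have h2 : (2 : ZMod 2) = 0 := by decide
            push_cast
            rw [h2]; simp
          rw [hk1, one_smul] at he
          have hb0 : red7 b = 0 := by simpa using he
          obtain ⟨y, rfl⟩ := red7_eq_zero b hb0
          have hyL := hint y hx
          rw [dotProduct_smul, smul_eq_mul] at hk
          obtain ⟨r, hr⟩ := hod
          omega
      · rintro _ ⟨e, rfl, ⟨x, hx, hxe⟩⟩
        obtain ⟨b, rfl, hb⟩ := hform x hx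
        obtain ⟨k, hk⟩ := code7_dot b m hb hmC
        have hxe' : half7 (k • m - b) = half7 e := by rw [← hg b k hk]; exact hxe
        have hxe2 := half7_inj hxe'
        refine ⟨k • a - b, ?_, ?_⟩
        · rw [← hxe2, red7_sub, red7_sub, red7_smul, red7_smul, hma]
        · rw [half7_sub, half7_smul]
          exact L.sub_mem (L.smul_mem _ haL) hx
    have hlt := Set.ncard_lt_ncard hsub (Set.toFinite _)
    obtain ⟨h, h1, h2⟩ := ih _ (hn ▸ hlt) (mapLat g L) hL' hΛ' rfl
    have heq : mapLat (g.trans h) L = mapLat h (mapLat g L) := by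
      ext x
      constructor
      · rintro ⟨y, hy, rfl⟩
        exact ⟨g y, ⟨y, hy, rfl⟩, rfl⟩
      · rintro ⟨_, ⟨y, hy, rfl⟩, rfl⟩
        exact ⟨y, hy, rfl⟩
    exact ⟨g.trans h, heq ▸ h1, heq ▸ h2⟩

/-- If `v ∈ Λ₇♯` has `‖v‖² = 3` and its coset has minimal norm 3, and `O₇ = ⟨Λ₇, v⟩`,
then every integral lattice in `ℝ⁷` containing `Λ₇` is isometric to one of eleven
lattices. -/
theorem integral_lattices_containing_Λ7 (v : E 7)
    (hv : v ∈ dualLattice Λ7) (hvnorm : ‖v‖ ^ 2 = 3)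
    (hvmin : ∀ y ∈ Λ7, 3 ≤ ‖v + y‖ ^ 2)
    (L : Submodule ℤ (E 7)) (hL : LatticeIsIntegral L) (hΛ : Λ7 ≤ L) :
    IsometricLattices L Λ7 ∨
    IsometricLattices L (Λ7 ⊔ Submodule.span ℤ {v}) ∨
    IsometricLattices L (Λ7 ⊔ Submodule.span ℤ {εv 0}) ∨
    IsometricLattices L (Λ7 ⊔ Submodule.span ℤ {εv 1 + εv 3}) ∨
    IsometricLattices L ((Λ7 ⊔ Submodule.span ℤ {v}) ⊔ Submodule.span ℤ {εv 0}) ∨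
    IsometricLattices L (Λ7 ⊔ Submodule.span ℤ {εv 0, εv 1}) ∨
    IsometricLattices L (Λ7 ⊔ Submodule.span ℤ {εv 0 + εv 2, εv 1 + εv 3}) ∨
    IsometricLattices L (Λ7 ⊔ Submodule.span ℤ {εv 0, εv 1, εv 3}) ∨
    IsometricLattices L (Λ7 ⊔ Submodule.span ℤ {εv 0, εv 1, εv 0 + εv 2}) ∨
    IsometricLattices L latD7 ∨
    IsometricLattices L latZ7 := by
  obtain ⟨a, rfl, ha⟩ := v_form v hv hvnorm hvmin
  obtain ⟨g, h1, h2⟩ := move_into_Z7 _ L hL hΛ rfl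
  obtain ⟨h, j, hj⟩ := classify_sub _ h1 h2
  have H := isometric_of_map_map g h L _ hj
  rw [← lat_id4 a ha, ← lat_id1 a ha, ← lat_id2, ← lat_id3, ← lat_id5, ← lat_id6, ← lat_id7,
    ← lat_id8, ← lat_id9, ← lat_id10, Λ7_eq]
  fin_cases j
  · exact Or.inl H
  all_goals tauto
end
end

section
/- The quotient group Λ7♯/Λ7 has exactly 256 elements, consisting of: the zero coset; exactly 56 cosets of minimal norm 3/4, each of order 4; exactly 63 cosets of minimal norm 1, each of order 2; exactly 72 cosets of minimal norm 7/4, each of order 4; exactly 63 cosets of minimal norm 2, each of order 2; and exactly 1 coset of minimal norm 3, of order 2. Here the minimal norm of a coset is the minimum of ‖x‖² over x in the coset. -/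
noncomputable section

open scoped RealInnerProductSpace

/-- Square of the centred residue mod 4. -/
def rsq (x : ℤ) : ℕ := x.natAbs * x.natAbs % 8

lemma rsq_eq (x : ℤ) : rsq x = if x % 4 = 0 then 0 else if x % 4 = 2 then 4 else 1 := by
  unfold rsq
  rw [Nat.mul_mod]
  have h8 : x.natAbs % 8 < 8 := Nat.mod_lt _ (by norm_num)
  have hx : x % 4 = (x.natAbs % 8 : ℕ) % 4 ∨ x % 4 = (8 - x.natAbs % 8 : ℕ) % 4 := by omega
  generalize x.natAbs % 8 = r at h8 hx
  interval_cases r <;> rcases hx with hx | hx <;> rw [hx] <;> rfl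

/-- Centred residue mod 4. -/
def cen (x : ℤ) : ℤ := (x + 1) % 4 - 1

/-- Coordinates of twice a dual vector from its pairings with a basis of `Λ7`. -/
def zOf (k : Fin 7 → ℤ) : Fin 7 → ℤ :=
  ![k 0 - (2 * k 2 - k 4 - k 5) - 2 * k 3,
    k 0 - (2 * k 1 - (2 * k 3 - k 4 - k 5 - k 6) - k 4) - 2 * k 3,
    2 * k 3 - k 4 - k 5 - k 6,
    (2 * k 1 - (2 * k 3 - k 4 - k 5 - k 6) - k 4) + (2 * k 2 - k 4 - k 5) + 2 * k 3 - k 0,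
    k 4, k 5, k 6]

def rsum (k : Fin 7 → ℤ) : ℕ :=
  rsq (zOf k 0) + rsq (zOf k 1) + rsq (zOf k 2) + rsq (zOf k 3) + rsq (zOf k 4) + rsq (zOf k 5)
    + rsq (zOf k 6)

def min2 (f : ℤ → ℕ) : ℕ := min (f 0) (f 1)

abbrev GG := ZMod 4 × ZMod 2 × ZMod 2 × ZMod 2 × ZMod 2 × ZMod 2 × ZMod 2

def repk (g : GG) (b c d : ℤ) : Fin 7 → ℤ :=
  ![(g.1.val : ℤ), (g.2.1.val : ℤ), (g.2.2.1.val : ℤ), (g.2.2.2.1.val : ℤ),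
    (g.2.2.2.2.1.val : ℤ) + 2 * b, (g.2.2.2.2.2.1.val : ℤ) + 2 * c,
    (g.2.2.2.2.2.2.val : ℤ) + 2 * d]

/-- Four times the minimal norm of a class. -/
def mG (g : GG) : ℕ := min2 fun b => min2 fun c => min2 fun d => rsum (repk g b c d)

def piG : (Fin 7 → ℤ) →+ GG where
  toFun k := ((k 0 : ZMod 4), (k 1 : ZMod 2), (k 2 : ZMod 2), (k 3 : ZMod 2), (k 4 : ZMod 2),
    (k 5 : ZMod 2), (k 6 : ZMod 2))
  map_zero' := by simp
  map_add' := by intro a b; simp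

lemma rsq_le (x : ℤ) : (rsq x : ℤ) ≤ x ^ 2 := by
  rw [rsq_eq]
  split_ifs with h1 h2
  · push_cast; positivity
  · have : x ≤ -2 ∨ 2 ≤ x := by omega
    push_cast; rcases this with h | h <;> nlinarith
  · have : x ≤ -1 ∨ 1 ≤ x := by omega
    push_cast; rcases this with h | h <;> nlinarith

lemma rsq_congr {x y : ℤ} (h : x % 4 = y % 4) : rsq x = rsq y := by
  rw [rsq_eq, rsq_eq, h]

lemma rsq_cen (x : ℤ) : (cen x) ^ 2 = (rsq x : ℤ) := by
  rw [rsq_eq]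
  have : x % 4 = 0 ∨ x % 4 = 1 ∨ x % 4 = 2 ∨ x % 4 = 3 := by omega
  rcases this with h | h | h | h
  · have : cen x = 0 := by unfold cen; omega
    simp [this, h]
  · have : cen x = 1 := by unfold cen; omega
    simp [this, h]
  · have : cen x = 2 := by unfold cen; omega
    simp [this, h]
  · have : cen x = -1 := by unfold cen; omega
    simp [this, h]

lemma min2_le (f : ℤ → ℕ) (x : ℤ) : min2 f ≤ f (x % 2) := by
  unfold min2
  have : x % 2 = 0 ∨ x % 2 = 1 := by omega
  rcases this with h | h <;> rw [h]
  · exact min_le_left _ _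
  · exact min_le_right _ _

lemma min2_att (f : ℤ → ℕ) : ∃ x, min2 f = f x := by
  unfold min2
  rcases min_choice (f 0) (f 1) with h | h
  · exact ⟨0, h⟩
  · exact ⟨1, h⟩

def nsq (k : Fin 7 → ℤ) : ℤ := ∑ i, (zOf k i) ^ 2

lemma mG_le (k : Fin 7 → ℤ) : (mG (piG k) : ℤ) ≤ nsq k := by
  have h1 : mG (piG k) ≤ rsum k := by
    unfold mG
    refine (min2_le _ (k 4 / 2)).trans ((min2_le _ (k 5 / 2)).trans
      ((min2_le _ (k 6 / 2)).trans (le_of_eq ?_)))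
    simp only [rsum, zOf, repk, piG, AddMonoidHom.coe_mk, ZeroHom.coe_mk, ZMod.val_intCast]
    simp
    congr 1
    · congr 1
      · congr 1
        · congr 1
          · congr 1
            · congr 1
              · apply rsq_congr; omega
              · apply rsq_congr; omega
            · apply rsq_congr; omega
          · apply rsq_congr; omega
        · apply rsq_congr; omega
      · apply rsq_congr; omega
    · apply rsq_congr; omega
  have h2 : (rsum k : ℤ) ≤ nsq k := by
    unfold rsum nsq
    rw [Fin.sum_univ_seven]
    push_cast
    linarith [rsq_le (zOf k 0), rsq_le (zOf k 1), rsq_le (zOf k 2), rsq_le (zOf k 3),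
      rsq_le (zOf k 4), rsq_le (zOf k 5), rsq_le (zOf k 6)]
  exact (by exact_mod_cast h1 : (mG (piG k) : ℤ) ≤ rsum k).trans h2

lemma cen_eq (x : ℤ) : ∃ n, cen x = x + 4 * n := ⟨-((x+1)/4), by unfold cen; omega⟩

lemma piG_repk (g : GG) (b c d : ℤ) : piG (repk g b c d) = g := by
  obtain ⟨g0, g1, g2, g3, g4, g5, g6⟩ := g
  have h2 : (2 : ZMod 2) = 0 := rfl
  simp [piG, repk, h2]

lemma mG_att (g : GG) : ∃ k, piG k = g ∧ nsq k = mG g := by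
  unfold mG
  obtain ⟨b, hb⟩ := min2_att fun b => min2 fun c => min2 fun d => rsum (repk g b c d)
  obtain ⟨c, hc⟩ := min2_att fun c => min2 fun d => rsum (repk g b c d)
  obtain ⟨d, hd⟩ := min2_att fun d => rsum (repk g b c d)
  rw [hb, hc, hd]
  have hg := piG_repk g b c d
  generalize repk g b c d = k at hg
  choose n hn using fun i => cen_eq (zOf k i)
  have hz : zOf ![k 0 + 4 * (∑ i, n i), k 1 + 2 * (n 0 + n 2 + n 3 + n 4),
      k 2 + 2 * (n 1 + n 3 + n 4 + n 5), k 3 + 2 * (n 2 + n 4 + n 5 + n 6), k 4 + 4 * n 4,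
      k 5 + 4 * n 5, k 6 + 4 * n 6] = fun i => cen (zOf k i) := by
    funext i
    rw [hn, Fin.sum_univ_seven]
    fin_cases i <;> simp [zOf] <;> ring
  refine ⟨![k 0 + 4 * (∑ i, n i), k 1 + 2 * (n 0 + n 2 + n 3 + n 4),
      k 2 + 2 * (n 1 + n 3 + n 4 + n 5), k 3 + 2 * (n 2 + n 4 + n 5 + n 6), k 4 + 4 * n 4,
      k 5 + 4 * n 5, k 6 + 4 * n 6], ?_, ?_⟩
  rotate_left
  · unfold nsq
    rw [hz]
    simp only [rsq_cen, Fin.sum_univ_seven, rsum]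
    push_cast
    rfl
  · rw [← hg]
    have h2 : (2 : ZMod 2) = 0 := rfl
    have h4 : (4 : ZMod 4) = 0 := rfl
    have h42 : (4 : ZMod 2) = 0 := rfl
    simp [piG, h2, h4, h42]

lemma mem_code7_iff (y : Fin 7 → ℤ) : (fun i => (y i : ZMod 2)) ∈ code7 ↔
    (y 3 - y 0 - y 1) % 2 = 0 ∧ (y 4 - y 1 - y 2) % 2 = 0 ∧ (y 5 - y 1 - y 2 - y 0) % 2 = 0 ∧
      (y 6 - y 2 - y 0) % 2 = 0 := by
  have key : ∀ c : Fin 7 → ZMod 2, c ∈ code7 ↔ c 3 = c 0 + c 1 ∧ c 4 = c 1 + c 2 ∧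
      c 5 = c 1 + c 2 + c 0 ∧ c 6 = c 2 + c 0 := by
    intro c
    have hs : ∀ x y : ZMod 2, x + y + x = y := by decide
    have hs2 : ∀ x y : ZMod 2, x + (y + x) = y := by decide
    unfold code7
    rw [Submodule.mem_span_triple]
    constructor
    · rintro ⟨a, b, d, rfl⟩
      simp
      revert a b d
      decide
    · rintro ⟨h3, h4, h5, h6⟩
      refine ⟨c 0, c 1, c 2 + c 0, ?_⟩
      funext i
      fin_cases i <;> simp [h3, h4, h5, h6]
      all_goals
        generalize c 0 = x0
        generalize c 1 = x1
        generalize c 2 = x2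
        revert x0 x1 x2
        decide
  rw [key]
  have e : ∀ n : ℤ, n % 2 = 0 ↔ (n : ZMod 2) = 0 := by
    intro n
    rw [ZMod.intCast_zmod_eq_zero_iff_dvd n 2]
    exact (Int.dvd_iff_emod_eq_zero).symm
  simp only [e]
  push_cast
  generalize (y 0 : ZMod 2) = x0
  generalize (y 1 : ZMod 2) = x1
  generalize (y 2 : ZMod 2) = x2
  generalize (y 3 : ZMod 2) = x3
  generalize (y 4 : ZMod 2) = x4
  generalize (y 5 : ZMod 2) = x5
  generalize (y 6 : ZMod 2) = x6
  simp only [sub_eq_zero, sub_sub, add_assoc]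

lemma mem_Λ7_iff (v : E 7) : v ∈ Λ7 ↔
    ∃ x : Fin 7 → ℤ, (fun i => (x i : ZMod 2)) ∈ code7 ∧ v = intVec x := by
  constructor
  · intro h
    unfold Λ7 at h
    induction h using Submodule.span_induction with
    | mem x h => exact h
    | zero => exact ⟨0, by
      convert code7.zero_mem using 1
      funext i; simp, by ext i; simp [intVec]⟩
    | add x y _ _ hx hy =>
      obtain ⟨a, ha, rfl⟩ := hx
      obtain ⟨b, hb, rfl⟩ := hy
      refine ⟨a + b, ?_, ?_⟩
      · convert code7.add_mem ha hb using 1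
        funext i; simp
      · ext i; simp [intVec]
    | smul c x _ hx =>
      obtain ⟨a, ha, rfl⟩ := hx
      refine ⟨c • a, ?_, ?_⟩
      · convert code7.smul_mem (c : ZMod 2) ha using 1
        funext i; simp
      · ext i; simp [intVec]
  · intro h
    exact Submodule.subset_span h

lemma inner_intVec (x : E 7) (y : Fin 7 → ℤ) : ⟪x, intVec y⟫ = x 0 * y 0 + x 1 * y 1 + x 2 * y 2
    + x 3 * y 3 + x 4 * y 4 + x 5 * y 5 + x 6 * y 6 := by
  simp [PiLp.inner_apply, Fin.sum_univ_seven, intVec]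
  ring

/-- The dual vector with prescribed pairings. -/
def Lvec (k : Fin 7 → ℤ) : E 7 := vec fun i => (zOf k i : ℝ) / 2

lemma Lvec_apply (k : Fin 7 → ℤ) (i : Fin 7) : Lvec k i = (zOf k i : ℝ) / 2 := rfl

lemma Lvec_mem (k : Fin 7 → ℤ) : Lvec k ∈ dualLattice Λ7 := by
  intro v hv
  rw [mem_Λ7_iff] at hv
  obtain ⟨y, hy, rfl⟩ := hv
  rw [mem_code7_iff] at hy
  obtain ⟨h3, h4, h5, h6⟩ := hy
  obtain ⟨n3, h3⟩ := Int.dvd_of_emod_eq_zero h3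
  obtain ⟨n4, h4⟩ := Int.dvd_of_emod_eq_zero h4
  obtain ⟨n5, h5⟩ := Int.dvd_of_emod_eq_zero h5
  obtain ⟨n6, h6⟩ := Int.dvd_of_emod_eq_zero h6
  have e3 : y 3 = y 0 + y 1 + 2 * n3 := by linarith
  have e4 : y 4 = y 1 + y 2 + 2 * n4 := by linarith
  have e5 : y 5 = y 1 + y 2 + y 0 + 2 * n5 := by linarith
  have e6 : y 6 = y 2 + y 0 + 2 * n6 := by linarith
  refine ⟨y 0 * k 1 + y 1 * k 2 + (y 2 - y 0) * k 3 + zOf k 3 * n3 + zOf k 4 * (n4 + y 0 - y 0)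
    + zOf k 5 * (n5 + y 0) + zOf k 6 * (n6 + y 0), ?_⟩
  rw [inner_intVec, e3, e4, e5, e6]
  simp only [Lvec_apply]
  simp [zOf]
  ring

def Lhom : (Fin 7 → ℤ) →+ dualLattice Λ7 where
  toFun k := ⟨Lvec k, Lvec_mem k⟩
  map_zero' := by
    ext i
    simp only [Lvec_apply]
    fin_cases i <;> simp [zOf]
  map_add' := by
    intro a b
    ext i
    simp only [Submodule.coe_add, PiLp.add_apply, Lvec_apply]
    fin_cases i <;> simp [zOf] <;> ring

lemma Lhom_surj : Function.Surjective Lhom := by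
  rintro ⟨x, hx⟩
  have key : ∀ y : Fin 7 → ℤ, ((y 3 - y 0 - y 1) % 2 = 0 ∧ (y 4 - y 1 - y 2) % 2 = 0 ∧
      (y 5 - y 1 - y 2 - y 0) % 2 = 0 ∧ (y 6 - y 2 - y 0) % 2 = 0) →
      ∃ k : ℤ, x 0 * y 0 + x 1 * y 1 + x 2 * y 2
    + x 3 * y 3 + x 4 * y 4 + x 5 * y 5 + x 6 * y 6 = k := by
    intro y hy
    obtain ⟨k, hk⟩ := hx (intVec y) ((mem_Λ7_iff _).2 ⟨y, (mem_code7_iff y).2 hy, rfl⟩)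
    exact ⟨k, by rw [← hk, inner_intVec]⟩
  obtain ⟨k0, h0⟩ := key ![2, 2, 2, 2, 2, 2, 2] (by decide)
  obtain ⟨k1, h1⟩ := key ![1, 0, 1, 1, 1, 0, 0] (by decide)
  obtain ⟨k2, h2⟩ := key ![0, 1, 0, 1, 1, 1, 0] (by decide)
  obtain ⟨k3, h3⟩ := key ![0, 0, 1, 0, 1, 1, 1] (by decide)
  obtain ⟨k4, h4⟩ := key ![0, 0, 0, 0, 2, 0, 0] (by decide)
  obtain ⟨k5, h5⟩ := key ![0, 0, 0, 0, 0, 2, 0] (by decide)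
  obtain ⟨k6, h6⟩ := key ![0, 0, 0, 0, 0, 0, 2] (by decide)
  simp at h0 h1 h2 h3 h4 h5 h6
  refine ⟨![k0, k1, k2, k3, k4, k5, k6], ?_⟩
  apply Subtype.ext
  ext i
  change Lvec _ i = x i
  rw [Lvec_apply]
  fin_cases i <;> simp [zOf] <;> linarith

lemma Lvec_mem_Λ7_iff (k : Fin 7 → ℤ) : Lvec k ∈ Λ7 ↔ piG k = 0 := by
  have e2 : ∀ n : ℤ, (n : ZMod 2) = 0 ↔ n % 2 = 0 := by
    intro n
    rw [ZMod.intCast_zmod_eq_zero_iff_dvd n 2]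
    exact Int.dvd_iff_emod_eq_zero
  have e4 : ∀ n : ℤ, (n : ZMod 4) = 0 ↔ n % 4 = 0 := by
    intro n
    rw [ZMod.intCast_zmod_eq_zero_iff_dvd n 4]
    exact Int.dvd_iff_emod_eq_zero
  have hp : piG k = 0 ↔ k 0 % 4 = 0 ∧ k 1 % 2 = 0 ∧ k 2 % 2 = 0 ∧ k 3 % 2 = 0 ∧ k 4 % 2 = 0 ∧
      k 5 % 2 = 0 ∧ k 6 % 2 = 0 := by
    simp only [piG, AddMonoidHom.coe_mk, ZeroHom.coe_mk, Prod.mk_eq_zero, e2, e4]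
  rw [hp, mem_Λ7_iff]
  constructor
  · rintro ⟨y, hy, h⟩
    rw [mem_code7_iff] at hy
    have hz : ∀ i, zOf k i = 2 * y i := by
      intro i
      have := congrArg (fun v : E 7 => v i) h
      simp only [Lvec_apply] at this
      have h' : (zOf k i : ℝ) / 2 = (y i : ℝ) := this
      have : (zOf k i : ℝ) = 2 * (y i : ℝ) := by linarith
      exact_mod_cast this
    have z0 := hz 0
    have z1 := hz 1
    have z2 := hz 2
    have z3 := hz 3
    have z4 := hz 4
    have z5 := hz 5
    have z6 := hz 6
    simp [zOf] at z0 z1 z2 z3 z4 z5 z6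
    omega
  · intro h
    refine ⟨fun i => zOf k i / 2, ?_, ?_⟩
    · rw [mem_code7_iff]
      simp [zOf]
      omega
    · ext i
      rw [Lvec_apply]
      change (zOf k i : ℝ) / 2 = ((zOf k i / 2 : ℤ) : ℝ)
      have : zOf k i = 2 * (zOf k i / 2) := by
        fin_cases i <;> simp [zOf] <;> omega
      have h' : (zOf k i : ℝ) = 2 * ((zOf k i / 2 : ℤ) : ℝ) := by exact_mod_cast this
      linarith

def Fhom : (Fin 7 → ℤ) →+ DualQuot Λ7 :=
  (Submodule.mkQ (Λ7.comap (dualLattice Λ7).subtype)).toAddMonoidHom.comp Lhom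

lemma Fhom_apply (k) : Fhom k = Submodule.Quotient.mk (Lhom k) := rfl

lemma Fhom_surj : Function.Surjective Fhom :=
  (Submodule.mkQ_surjective _).comp Lhom_surj

lemma piG_surj : Function.Surjective piG := fun g => ⟨_, piG_repk g 0 0 0⟩

lemma ker_eq : Fhom.ker = piG.ker := by
  ext k
  rw [AddMonoidHom.mem_ker, AddMonoidHom.mem_ker, Fhom_apply, Submodule.Quotient.mk_eq_zero,
    ← Lvec_mem_Λ7_iff]
  rfl

lemma exists_equiv : ∃ e : DualQuot Λ7 ≃+ GG, ∀ k, e (Fhom k) = piG k := by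
  refine ⟨((QuotientAddGroup.quotientKerEquivOfSurjective Fhom Fhom_surj).symm.trans
    (QuotientAddGroup.quotientAddEquivOfEq ker_eq)).trans
    (QuotientAddGroup.quotientKerEquivOfSurjective piG piG_surj), fun k => ?_⟩
  have : (QuotientAddGroup.quotientKerEquivOfSurjective Fhom Fhom_surj).symm (Fhom k)
      = (k : (Fin 7 → ℤ) ⧸ Fhom.ker) := by
    rw [AddEquiv.symm_apply_eq]; rfl
  simp only [AddEquiv.trans_apply, this]
  rfl

lemma norm_Lvec (k : Fin 7 → ℤ) : ‖Lvec k‖ ^ 2 = (nsq k : ℝ) / 4 := by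
  rw [EuclideanSpace.norm_sq_eq]
  simp only [Lvec_apply, nsq, Fin.sum_univ_seven, Real.norm_eq_abs, sq_abs]
  push_cast
  ring

lemma cosetMinNorm_iff (e : DualQuot Λ7 ≃+ GG) (he : ∀ k, e (Fhom k) = piG k)
    (c : DualQuot Λ7) (r : ℝ) : CosetMinNorm Λ7 c r ↔ r = (mG (e c) : ℝ) / 4 := by
  have h : CosetMinNorm Λ7 c ((mG (e c) : ℝ) / 4) := by
    constructor
    · obtain ⟨k, hk, hn⟩ := mG_att (e c)
      refine ⟨Lhom k, ?_, ?_⟩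
      · rw [← Fhom_apply]
        apply e.injective
        rw [he, hk]
      · change _ = ‖Lvec k‖ ^ 2
        rw [norm_Lvec, hn]
        push_cast
        rfl
    · rintro _ ⟨x, hx, rfl⟩
      obtain ⟨k, rfl⟩ := Lhom_surj x
      rw [← Fhom_apply] at hx
      subst hx
      rw [he]
      change _ ≤ ‖Lvec k‖ ^ 2
      rw [norm_Lvec]
      have : (mG (piG k) : ℝ) ≤ (nsq k : ℝ) := by exact_mod_cast mG_le k
      linarith
  constructor
  · intro h'
    exact h'.unique h
  · rintro rfl
    exact h

def ordG (g : GG) : ℕ := if g = 0 then 1 else if g.1.val % 2 = 0 then 2 else 4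

lemma addOrderOf_GG (g : GG) : addOrderOf g = ordG g := by
  have h2 : ∀ x : ZMod 2, x + x = 0 := by decide
  have ha : ∀ x : ZMod 4, x.val % 2 = 0 ↔ x + x = 0 := by decide
  have hb : ∀ x : ZMod 4, (x + x) + (x + x) = 0 := by decide
  unfold ordG
  obtain ⟨g0, g1, g2, g3, g4, g5, g6⟩ := g
  split_ifs with h h'
  · rw [h]; exact addOrderOf_zero
  · rw [ha] at h'
    refine addOrderOf_eq_prime ?_ h
    rw [two_nsmul]
    simp [h2, h']
  · rw [ha] at h'
    refine addOrderOf_eq_prime_pow (p := 2) (n := 1) ?_ ?_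
    · rw [pow_one, two_nsmul]
      simp [h2, h']
    · rw [show 2 ^ (1 + 1) = 2 * 2 from rfl, mul_nsmul, two_nsmul, two_nsmul]
      simp [h2, hb]

/-- A version of `mG` on natural numbers that evaluates quickly. -/
def fsq (n : ℕ) : ℕ := n * n % 8

def fsum (a t1 t2 t3 u4 u5 u6 : ℕ) : ℕ :=
  fsq (a + 2 * t2 + u4 + u5 + 2 * t3) + fsq (a + 2 * t1 + 3 * u5 + 3 * u6)
    + fsq (2 * t3 + 3 * u4 + 3 * u5 + 3 * u6) + fsq (2 * t1 + 2 * t2 + u6 + 3 * u4 + 3 * a)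
    + fsq u4 + fsq u5 + fsq u6

def fmin (f : ℕ → ℕ) : ℕ := Nat.min (f 0) (f 2)

def fG (g : GG) : ℕ :=
  fmin fun b => fmin fun c => fmin fun d => fsum g.1.val g.2.1.val g.2.2.1.val g.2.2.2.1.val
    (g.2.2.2.2.1.val + b) (g.2.2.2.2.2.1.val + c) (g.2.2.2.2.2.2.val + d)

lemma rsq_fsq {x : ℤ} {n : ℕ} (h : x % 4 = (n : ℤ) % 4) : rsq x = fsq n := by
  rw [rsq_congr h]; rfl

lemma rsum_fsum (g : GG) (b c d : ℕ) : rsum (repk g b c d) =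
    fsum g.1.val g.2.1.val g.2.2.1.val g.2.2.2.1.val
    (g.2.2.2.2.1.val + 2 * b) (g.2.2.2.2.2.1.val + 2 * c) (g.2.2.2.2.2.2.val + 2 * d) := by
  simp only [rsum, fsum, zOf, repk]
  simp only [Matrix.cons_val]
  refine congrArg₂ _ (congrArg₂ _ (congrArg₂ _ (congrArg₂ _ (congrArg₂ _ (congrArg₂ _
    (rsq_fsq ?_) (rsq_fsq ?_)) (rsq_fsq ?_)) (rsq_fsq ?_)) (rsq_fsq ?_)) (rsq_fsq ?_))
    (rsq_fsq ?_) <;> push_cast <;> omega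

lemma min2_fmin (f : ℤ → ℕ) (h : ℕ → ℕ) (e : ∀ b : ℕ, f b = h (2 * b)) : min2 f = fmin h := by
  have h0 := e 0
  have h1 := e 1
  simp only [Nat.cast_zero, Nat.cast_one, mul_zero, mul_one] at h0 h1
  unfold min2 fmin
  rw [h0, h1]

lemma mG_eq_fG : mG = fG := by
  funext g
  unfold mG fG
  exact min2_fmin _ _ fun b => min2_fmin _ _ fun c => min2_fmin _ _ fun d => rsum_fsum g b c d

def okG (g : GG) : Bool :=
  decide (g = 0) || (decide (mG g = 3) && decide (ordG g = 4)) ||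
    (decide (mG g = 4) && decide (ordG g = 2)) || (decide (mG g = 7) && decide (ordG g = 4)) ||
    (decide (mG g = 8) && decide (ordG g = 2)) || (decide (mG g = 12) && decide (ordG g = 2))

lemma okG_all : (Finset.univ.filter fun g : GG => okG g = true).card = 256 := by
  unfold okG
  rw [mG_eq_fG]
  decide +kernel

lemma card_GG : Fintype.card GG = 256 := by
  decide +kernel

lemma GG_cases (g : GG) : g = 0 ∨ (mG g = 3 ∧ ordG g = 4) ∨ (mG g = 4 ∧ ordG g = 2) ∨
    (mG g = 7 ∧ ordG g = 4) ∨ (mG g = 8 ∧ ordG g = 2) ∨ (mG g = 12 ∧ ordG g = 2) := by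
  have h : (Finset.univ.filter fun g : GG => okG g = true) = Finset.univ := by
    rw [← Finset.card_eq_iff_eq_univ, okG_all, card_GG]
  have hg : g ∈ (Finset.univ.filter fun g : GG => okG g = true) := by
    rw [h]; exact Finset.mem_univ g
  have h2 : okG g = true := (Finset.mem_filter.1 hg).2
  simpa only [okG, Bool.or_eq_true, Bool.and_eq_true, decide_eq_true_eq, or_assoc] using h2

lemma card_3 : (Finset.univ.filter fun g : GG => mG g = 3 ∧ ordG g = 4).card = 56 := by
  rw [mG_eq_fG]
  decide +kernel

lemma card_4 : (Finset.univ.filter fun g : GG => mG g = 4 ∧ ordG g = 2).card = 63 := by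
  rw [mG_eq_fG]
  decide +kernel

lemma card_7 : (Finset.univ.filter fun g : GG => mG g = 7 ∧ ordG g = 4).card = 72 := by
  rw [mG_eq_fG]
  decide +kernel

lemma card_8 : (Finset.univ.filter fun g : GG => mG g = 8 ∧ ordG g = 2).card = 63 := by
  rw [mG_eq_fG]
  decide +kernel

lemma card_12 : (Finset.univ.filter fun g : GG => mG g = 12 ∧ ordG g = 2).card = 1 := by
  rw [mG_eq_fG]
  decide +kernel

lemma ncard_aux (e : DualQuot Λ7 ≃+ GG) (he : ∀ k, e (Fhom k) = piG k) (r : ℝ) (m o N : ℕ)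
    (hr : r = (m : ℝ) / 4)
    (hN : (Finset.univ.filter fun g : GG => mG g = m ∧ ordG g = o).card = N) :
    {c : DualQuot Λ7 | CosetMinNorm Λ7 c r ∧ addOrderOf c = o}.ncard = N := by
  have : {c : DualQuot Λ7 | CosetMinNorm Λ7 c r ∧ addOrderOf c = o} =
      e.symm '' ((Finset.univ.filter fun g : GG => mG g = m ∧ ordG g = o : Finset GG) : Set GG) := by
    ext c
    rw [show (e.symm '' ((Finset.univ.filter fun g : GG => mG g = m ∧ ordG g = o : Finset GG) :
      Set GG)) = e ⁻¹' _ from e.symm.toEquiv.image_eq_preimage_symm _]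
    simp only [Set.mem_ofPred_eq, Set.mem_preimage, Finset.coe_filter, Finset.mem_univ, true_and]
    rw [cosetMinNorm_iff e he, ← addOrderOf_GG, hr, AddEquiv.addOrderOf_eq]
    refine and_congr_left fun _ => ?_
    constructor
    · intro h
      have : (m : ℝ) = mG (e c) := by linarith
      exact_mod_cast this.symm
    · intro h
      rw [h]
  rw [this, Set.ncard_image_of_injective _ e.symm.injective, Set.ncard_coe_finset, hN]

/-- The quotient `Λ₇♯/Λ₇` has exactly 256 elements: the zero coset, 56 cosets of minimal
norm 3/4 and order 4, 63 cosets of minimal norm 1 and order 2, 72 cosets of minimal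
norm 7/4 and order 4, 63 cosets of minimal norm 2 and order 2, and 1 coset of minimal
norm 3 and order 2. -/
theorem Λ7_dual_quotient_classes :
    Nat.card (DualQuot Λ7) = 256 ∧
    (∀ c : DualQuot Λ7, c = 0 ∨
      (CosetMinNorm Λ7 c (3/4) ∧ addOrderOf c = 4) ∨
      (CosetMinNorm Λ7 c 1 ∧ addOrderOf c = 2) ∨
      (CosetMinNorm Λ7 c (7/4) ∧ addOrderOf c = 4) ∨
      (CosetMinNorm Λ7 c 2 ∧ addOrderOf c = 2) ∨
      (CosetMinNorm Λ7 c 3 ∧ addOrderOf c = 2)) ∧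
    {c : DualQuot Λ7 | CosetMinNorm Λ7 c (3/4) ∧ addOrderOf c = 4}.ncard = 56 ∧
    {c : DualQuot Λ7 | CosetMinNorm Λ7 c 1 ∧ addOrderOf c = 2}.ncard = 63 ∧
    {c : DualQuot Λ7 | CosetMinNorm Λ7 c (7/4) ∧ addOrderOf c = 4}.ncard = 72 ∧
    {c : DualQuot Λ7 | CosetMinNorm Λ7 c 2 ∧ addOrderOf c = 2}.ncard = 63 ∧
    {c : DualQuot Λ7 | CosetMinNorm Λ7 c 3 ∧ addOrderOf c = 2}.ncard = 1 := by
  obtain ⟨e, he⟩ := exists_equiv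
  refine ⟨?_, ?_, ?_, ?_, ?_, ?_, ?_⟩
  · rw [Nat.card_congr e.toEquiv, Nat.card_eq_fintype_card, card_GG]
  · intro c
    have ho : addOrderOf c = ordG (e c) := by
      rw [← addOrderOf_GG, AddEquiv.addOrderOf_eq]
    have hm : ∀ (r : ℝ) (m : ℕ), mG (e c) = m → r = (m : ℝ) / 4 → CosetMinNorm Λ7 c r := by
      intro r m h1 h2
      rw [cosetMinNorm_iff e he, h1, h2]
    rcases GG_cases (e c) with h | ⟨h, h'⟩ | ⟨h, h'⟩ | ⟨h, h'⟩ | ⟨h, h'⟩ | ⟨h, h'⟩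
    · exact Or.inl ((AddEquiv.map_eq_zero_iff e).1 h)
    · exact Or.inr (Or.inl ⟨hm _ _ h (by norm_num), ho.trans h'⟩)
    · exact Or.inr (Or.inr (Or.inl ⟨hm _ _ h (by norm_num), ho.trans h'⟩))
    · exact Or.inr (Or.inr (Or.inr (Or.inl ⟨hm _ _ h (by norm_num), ho.trans h'⟩)))
    · exact Or.inr (Or.inr (Or.inr (Or.inr (Or.inl ⟨hm _ _ h (by norm_num), ho.trans h'⟩))))
    · exact Or.inr (Or.inr (Or.inr (Or.inr (Or.inr ⟨hm _ _ h (by norm_num), ho.trans h'⟩))))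
  · exact ncard_aux e he _ 3 4 56 (by norm_num) card_3
  · exact ncard_aux e he _ 4 2 63 (by norm_num) card_4
  · exact ncard_aux e he _ 7 4 72 (by norm_num) card_7
  · exact ncard_aux e he _ 8 2 63 (by norm_num) card_8
  · exact ncard_aux e he _ 12 2 1 (by norm_num) card_12
end
end

section
/- The lattices D16^+ and E8 ⊥ E8 in ℝ^16 have the same theta series: for every real number m, the set {x ∈ D16^+ : ‖x‖² = m} and the set {x ∈ E8 ⊥ E8 : ‖x‖² = m} are finite and have the same cardinality. -/
noncomputable section

open scoped RealInnerProductSpace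

/-- The lattice `D₁₆⁺ ⊆ ℝ¹⁶`: vectors whose coordinates are all integers or all
half-integers, with even coordinate sum. -/
def setD16plus : Set (E 16) :=
  {x | ((∀ i, ∃ k : ℤ, x i = k) ∨ (∀ i, ∃ k : ℤ, x i = k + 1/2)) ∧
    ∃ m : ℤ, ∑ i, x i = 2 * m}

/-- The `E₈` condition on an 8-tuple of reals: all coordinates integers or all
half-integers, with even coordinate sum. -/
def E8cond (y : Fin 8 → ℝ) : Prop :=
  ((∀ i, ∃ k : ℤ, y i = k) ∨ (∀ i, ∃ k : ℤ, y i = k + 1/2)) ∧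
    ∃ m : ℤ, ∑ i, y i = 2 * m

/-- The lattice `E₈ ⊥ E₈ ⊆ ℝ¹⁶`. -/
def setE8E8 : Set (E 16) :=
  {x | E8cond (fun i => x ⟨i.1, by have := i.2; omega⟩) ∧
       E8cond (fun i => x ⟨i.1 + 8, by have := i.2; omega⟩)}

namespace ThetaAux

/-- Squared norm on `ℤ⁴`. -/
def q (y : Fin 4 → ℤ) : ℤ := ∑ j, y j ^ 2

/-- The four classes of `2 D₄* / 2 D₄`. -/
def P (a : Fin 4) (y : Fin 4 → ℤ) : Prop :=
  (∀ j, y j % 2 = (a.1 / 2 : ℕ)) ∧ (∑ j, y j) % 4 = (2 * (a.1 % 2) : ℕ)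

def T (a : Fin 4) := {y : Fin 4 → ℤ // P a y}

def R (a b : Fin 4) : Prop := ∃ e : T a ≃ T b, ∀ y, q (e y).1 = q y.1

lemma R.refl (a : Fin 4) : R a a := ⟨Equiv.refl _, fun _ => rfl⟩
lemma R.symm {a b : Fin 4} (h : R a b) : R b a := by
  obtain ⟨e, he⟩ := h
  exact ⟨e.symm, fun y => by have := he (e.symm y); rw [e.apply_symm_apply] at this; exact this.symm⟩
lemma R.trans {a b c : Fin 4} (h : R a b) (h' : R b c) : R a c := by
  obtain ⟨e, he⟩ := h
  obtain ⟨f, hf⟩ := h'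
  exact ⟨e.trans f, fun y => by simp [hf, he]⟩

/-- Hadamard involution. -/
def hd (y : Fin 4 → ℤ) : Fin 4 → ℤ :=
  ![(y 0 + y 1 + y 2 + y 3) / 2, (y 0 + y 1 - y 2 - y 3) / 2,
    (y 0 - y 1 + y 2 - y 3) / 2, (y 0 - y 1 - y 2 + y 3) / 2]

/-- Sign flip of the first coordinate. -/
def fl (y : Fin 4 → ℤ) : Fin 4 → ℤ := ![-y 0, y 1, y 2, y 3]

lemma P_iff (a : Fin 4) (y : Fin 4 → ℤ) : P a y ↔
    (y 0 % 2 = (a.1 / 2 : ℕ) ∧ y 1 % 2 = (a.1 / 2 : ℕ) ∧ y 2 % 2 = (a.1 / 2 : ℕ) ∧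
      y 3 % 2 = (a.1 / 2 : ℕ)) ∧ (y 0 + y 1 + y 2 + y 3) % 4 = (2 * (a.1 % 2) : ℕ) := by
  simp [P, Fin.forall_fin_succ, Fin.sum_univ_four]

lemma hd_q (y : Fin 4 → ℤ) (h : (y 0 + y 1 + y 2 + y 3) % 2 = 0) : q (hd y) = q y := by
  obtain ⟨k, hk⟩ : ∃ k, y 0 + y 1 + y 2 + y 3 = 2 * k := ⟨(y 0 + y 1 + y 2 + y 3) / 2, by omega⟩
  have h3 : y 3 = 2 * k - y 0 - y 1 - y 2 := by omega
  have e0 : (y 0 + y 1 + y 2 + y 3) / 2 = k := by omega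
  have e1 : (y 0 + y 1 - y 2 - y 3) / 2 = y 0 + y 1 - k := by omega
  have e2 : (y 0 - y 1 + y 2 - y 3) / 2 = y 0 + y 2 - k := by omega
  have e3 : (y 0 - y 1 - y 2 + y 3) / 2 = k - y 1 - y 2 := by omega
  simp only [q, hd, Fin.sum_univ_four, e0, e1, e2, e3]
  simp
  rw [h3]; ring

lemma hd_hd (y : Fin 4 → ℤ) (h : (y 0 + y 1 + y 2 + y 3) % 2 = 0) : hd (hd y) = y := by
  funext j
  fin_cases j <;> simp [hd] <;> omega

lemma R12 : R 1 2 := by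
  refine ⟨⟨fun y => ⟨hd y.1, ?_⟩, fun y => ⟨hd y.1, ?_⟩, ?_, ?_⟩, ?_⟩
  · have := (P_iff _ _).1 y.2
    simp at this
    rw [P_iff]; simp [hd]; omega
  · have := (P_iff _ _).1 y.2
    simp at this
    rw [P_iff]; simp [hd]; omega
  · intro y
    have := (P_iff _ _).1 y.2
    simp at this
    exact Subtype.ext (hd_hd _ (by omega))
  · intro y
    have := (P_iff _ _).1 y.2
    simp at this
    exact Subtype.ext (hd_hd _ (by omega))
  · intro y
    have := (P_iff _ _).1 y.2
    simp at this
    exact hd_q _ (by omega)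

lemma fl_fl (y : Fin 4 → ℤ) : fl (fl y) = y := by
  funext j
  fin_cases j <;> simp [fl]

lemma R23 : R 2 3 := by
  refine ⟨⟨fun y => ⟨fl y.1, ?_⟩, fun y => ⟨fl y.1, ?_⟩, ?_, ?_⟩, ?_⟩
  · have := (P_iff _ _).1 y.2
    simp at this
    rw [P_iff]; simp [fl]; omega
  · have := (P_iff _ _).1 y.2
    simp at this
    rw [P_iff]; simp [fl]; omega
  · intro y
    exact Subtype.ext (fl_fl _)
  · intro y
    exact Subtype.ext (fl_fl _)
  · intro y
    change q (fl y.1) = q y.1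
    simp [q, fl, Fin.sum_univ_four]

lemma R1 (a : Fin 4) (h : a ≠ 0) : R 1 a := by
  fin_cases a
  · exact absurd rfl h
  · exact R.refl _
  · exact R12
  · exact R12.trans R23

lemma R_of (a b : Fin 4) (h : a = 0 ↔ b = 0) : R a b := by
  by_cases ha : a = 0
  · have hb := h.1 ha
    subst ha; subst hb; exact R.refl _
  · exact (R1 a ha).symm.trans (R1 b (fun hb => ha (h.2 hb)))

/-- Tuples with prescribed classes and total norm. -/
def S (n : ℝ) (w : Fin 4 → Fin 4) := {f : ∀ i, T (w i) // ((∑ i, q (f i).1 : ℤ) : ℝ) = n}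

/-- Number of zero entries. -/
def wt (w : Fin 4 → Fin 4) : ℕ := Fintype.card {i // w i = 0}

lemma S_equiv (n : ℝ) (w w' : Fin 4 → Fin 4) (h : wt w = wt w') : Nonempty (S n w ≃ S n w') := by
  let e0 := Fintype.equivOfCardEq h
  let π := e0.extendSubtype
  have hπ : ∀ i, w i = 0 ↔ w' (π i) = 0 := by
    intro i
    constructor
    · intro hi; exact e0.extendSubtype_mem i hi
    · intro hi
      by_contra hc
      exact e0.extendSubtype_not_mem i hc hi
  choose e he using fun i => R_of _ _ (hπ i)
  refine ⟨(Equiv.piCongr (W := fun i => T (w i)) (Z := fun i => T (w' i)) π e).subtypeEquiv ?_⟩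
  intro f
  rw [← Equiv.sum_comp π (fun i => q ((Equiv.piCongr (W := fun i => T (w i))
    (Z := fun i => T (w' i)) π e) f i).1)]
  simp only [Equiv.piCongr_apply_apply, he]

/-- Integer points with code condition `C` and norm `n`. -/
def Sh (C : (Fin 4 → Fin 4) → Prop) (n : ℝ) : Set (Fin 4 → Fin 4 → ℤ) :=
  {y | (∃ w, C w ∧ ∀ i, P (w i) (y i)) ∧ ((∑ i, q (y i) : ℤ) : ℝ) = n}

lemma P_unique {a b : Fin 4} {y : Fin 4 → ℤ} (ha : P a y) (hb : P b y) : a = b := by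
  have h1 := ha.1 0
  have h2 := hb.1 0
  have h3 := ha.2
  have h4 := hb.2
  ext
  omega

lemma Sh_equiv (C : (Fin 4 → Fin 4) → Prop) (n : ℝ) :
    Nonempty ((Σ w : {w // C w}, S n w.1) ≃ Sh C n) := by
  refine ⟨Equiv.ofBijective
    (fun p => ⟨fun i => (p.2.1 i).1, ⟨p.1.1, p.1.2, fun i => (p.2.1 i).2⟩, p.2.2⟩) ⟨?_, ?_⟩⟩
  · rintro ⟨⟨w, hw⟩, f, hf⟩ ⟨⟨w', hw'⟩, f', hf'⟩ h
    have h' : ∀ i, (f i).1 = (f' i).1 := fun i => congrFun (congrArg Subtype.val h) i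
    have hww : w = w' := by
      funext i
      exact P_unique (f i).2 (by rw [h' i]; exact (f' i).2)
    subst hww
    have : f = f' := by
      funext i
      exact Subtype.ext (h' i)
    subst this
    rfl
  · rintro ⟨y, ⟨w, hw, hy⟩, hn⟩
    exact ⟨⟨⟨w, hw⟩, ⟨fun i => ⟨y i, hy i⟩, hn⟩⟩, rfl⟩

/-- Glue code of `D₁₆⁺`. -/
def C1 (w : Fin 4 → Fin 4) : Prop :=
  (w 0).1 / 2 = (w 1).1 / 2 ∧ (w 0).1 / 2 = (w 2).1 / 2 ∧ (w 0).1 / 2 = (w 3).1 / 2 ∧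
    ((w 0).1 + (w 1).1 + (w 2).1 + (w 3).1) % 2 = 0

/-- Glue code of `E₈ ⊥ E₈`. -/
def C2 (w : Fin 4 → Fin 4) : Prop :=
  ((w 0).1 / 2 = (w 1).1 / 2 ∧ ((w 0).1 + (w 1).1) % 2 = 0) ∧
  ((w 2).1 / 2 = (w 3).1 / 2 ∧ ((w 2).1 + (w 3).1) % 2 = 0)

instance : DecidablePred C1 := fun w => by unfold C1; infer_instance
instance : DecidablePred C2 := fun w => by unfold C2; infer_instance

lemma fiber_card : ∀ c : Fin 5,
    Fintype.card {w : Fin 4 → Fin 4 // C1 w ∧ wt w = c.1} =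
    Fintype.card {w : Fin 4 → Fin 4 // C2 w ∧ wt w = c.1} := by
  decide +kernel

lemma code_equiv : ∃ e : {w // C1 w} ≃ {w // C2 w}, ∀ w, wt (e w).1 = wt w.1 := by
  have key : ∀ c : ℕ, Nonempty ({a : {w // C1 w} // wt a.1 = c} ≃ {b : {w // C2 w} // wt b.1 = c}) := by
    intro c
    by_cases hc : c < 5
    · have h := fiber_card ⟨c, hc⟩
      exact ⟨(Equiv.subtypeSubtypeEquivSubtypeInter _ _).trans
        ((Fintype.equivOfCardEq h).trans (Equiv.subtypeSubtypeEquivSubtypeInter _ _).symm)⟩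
    · have hle : ∀ w, wt w ≤ 4 := fun w => by
        simpa [wt] using Fintype.card_subtype_le (fun i => w i = 0)
      have : IsEmpty {a : {w // C1 w} // wt a.1 = c} := ⟨fun a => by
        have := hle a.1.1; have := a.2; omega⟩
      have : IsEmpty {a : {w // C2 w} // wt a.1 = c} := ⟨fun a => by
        have := hle a.1.1; have := a.2; omega⟩
      exact ⟨Equiv.equivOfIsEmpty _ _⟩
  refine ⟨Equiv.ofFiberEquiv (f := fun a : {w // C1 w} => wt a.1)
    (g := fun b : {w // C2 w} => wt b.1) (fun c => (key c).some), ?_⟩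
  intro w
  exact Equiv.ofFiberEquiv_map (f := fun a : {w // C1 w} => wt a.1)
    (g := fun b : {w // C2 w} => wt b.1) (fun c => (key c).some) w

lemma Sh_ncard (n : ℝ) : (Sh C1 n).ncard = (Sh C2 n).ncard := by
  obtain ⟨e1⟩ := Sh_equiv C1 n
  obtain ⟨e2⟩ := Sh_equiv C2 n
  obtain ⟨e, he⟩ := code_equiv
  have : ∀ w : {w // C1 w}, Nonempty (S n w.1 ≃ S n (e w).1) :=
    fun w => S_equiv n _ _ (he w).symm
  exact Nat.card_congr (e1.symm.trans ((Equiv.sigmaCongr e fun w => (this w).some).trans e2))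

lemma Sh_finite (C : (Fin 4 → Fin 4) → Prop) (n : ℝ) : (Sh C n).Finite := by
  by_cases hn : ∃ k : ℤ, (k : ℝ) = n
  · obtain ⟨k, hk⟩ := hn
    refine (Set.finite_Icc (fun _ _ => -k : Fin 4 → Fin 4 → ℤ) (fun _ _ => k)).subset ?_
    rintro y ⟨-, hy⟩
    have hy' : ∑ i, q (y i) = k := by rw [← hk] at hy; exact_mod_cast hy
    have hb : ∀ i j, y i j ^ 2 ≤ k := by
      intro i j
      rw [← hy']
      have h1 : y i j ^ 2 ≤ q (y i) :=
        Finset.single_le_sum (f := fun j => y i j ^ 2) (fun j _ => sq_nonneg _) (Finset.mem_univ j)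
      have h2 : q (y i) ≤ ∑ i, q (y i) :=
        Finset.single_le_sum (f := fun i => q (y i))
          (fun i _ => Finset.sum_nonneg fun j _ => sq_nonneg _) (Finset.mem_univ i)
      exact h1.trans h2
    constructor
    · intro i j
      have := hb i j
      have := Int.le_self_sq (-(y i j))
      simp only at *
      nlinarith
    · intro i j
      have := hb i j
      have := Int.le_self_sq (y i j)
      simp only at *
      nlinarith
  · convert Set.finite_empty
    ext y
    simp only [Set.mem_empty_iff_false, iff_false]
    exact fun hy => hn ⟨_, hy.2⟩

/-- The embedding of `(ℤ⁴)⁴` as half-integral vectors. -/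
def φ (y : Fin 4 → Fin 4 → ℤ) : E 16 :=
  WithLp.toLp 2 fun k => (y ⟨k.1 / 4, by omega⟩ ⟨k.1 % 4, by omega⟩ : ℝ) / 2

lemma φ_app (y : Fin 4 → Fin 4 → ℤ) (k : Fin 16) :
    φ y k = (y ⟨k.1 / 4, by omega⟩ ⟨k.1 % 4, by omega⟩ : ℝ) / 2 := rfl

lemma φ_inj : Function.Injective φ := by
  intro y z h
  funext i j
  have := congrArg (fun x : E 16 => x ⟨4 * i.1 + j.1, by omega⟩) h
  simp only [φ_app] at this
  have h1 : (4 * i.1 + j.1) / 4 = i.1 := by omega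
  have h2 : (4 * i.1 + j.1) % 4 = j.1 := by omega
  simp only [h1, h2, Fin.eta] at this
  have h3 : (y i j : ℝ) = z i j := by linarith
  exact_mod_cast h3

lemma φ_norm (y : Fin 4 → Fin 4 → ℤ) : ‖φ y‖ ^ 2 = ((∑ i, q (y i) : ℤ) : ℝ) / 4 := by
  rw [EuclideanSpace.norm_sq_eq]
  simp only [φ_app, q, Real.norm_eq_abs, sq_abs, Fin.sum_univ_succ]
  simp [Fin.succ]
  ring

/-- Class of a good vector. -/
lemma exists_P (y : Fin 4 → ℤ) (p : ℕ) (hp : p < 2) (h : ∀ j, y j % 2 = p) :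
    ∃ a : Fin 4, P a y ∧ a.1 / 2 = p := by
  have h0 := h 0
  have h1 := h 1
  have h2 := h 2
  have h3 := h 3
  refine ⟨⟨2 * p + (((y 0 + y 1 + y 2 + y 3) / 2) % 2).toNat, by omega⟩, ?_, ?_⟩
  · rw [P_iff]; simp only; omega
  · simp only; omega

/-- Integer form of the parity condition for a real vector. -/
lemma half_iff {ι : Type} (z : ι → ℤ) :
    ((∀ i, ∃ k : ℤ, (z i : ℝ) / 2 = k) ∨ (∀ i, ∃ k : ℤ, (z i : ℝ) / 2 = k + 1/2)) ↔
    ∃ p : ℕ, p < 2 ∧ ∀ i, z i % 2 = p := by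
  constructor
  · rintro (h | h)
    · refine ⟨0, by norm_num, fun i => ?_⟩
      obtain ⟨k, hk⟩ := h i
      have : (z i : ℝ) = 2 * k := by linarith
      have : z i = 2 * k := by exact_mod_cast this
      omega
    · refine ⟨1, by norm_num, fun i => ?_⟩
      obtain ⟨k, hk⟩ := h i
      have : (z i : ℝ) = 2 * k + 1 := by linarith
      have : z i = 2 * k + 1 := by exact_mod_cast this
      omega
  · rintro ⟨p, hp, h⟩
    interval_cases p
    · left
      intro i
      refine ⟨z i / 2, ?_⟩
      have := h i
      have h2 : z i = 2 * (z i / 2) := by omega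
      have h3 : (z i : ℝ) = 2 * ((z i / 2 : ℤ) : ℝ) := by exact_mod_cast h2
      linarith
    · right
      intro i
      refine ⟨z i / 2, ?_⟩
      have := h i
      have h2 : z i = 2 * (z i / 2) + 1 := by omega
      have h3 : (z i : ℝ) = 2 * ((z i / 2 : ℤ) : ℝ) + 1 := by exact_mod_cast h2
      linarith

lemma sum_iff (s : ℤ) : (∃ m : ℤ, (s : ℝ) / 2 = 2 * m) ↔ s % 4 = 0 := by
  constructor
  · rintro ⟨m, hm⟩
    have : (s : ℝ) = 4 * m := by linarith
    have : s = 4 * m := by exact_mod_cast this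
    omega
  · intro h
    refine ⟨s / 4, ?_⟩
    have h2 : s = 4 * (s / 4) := by omega
    have h3 : (s : ℝ) = 4 * ((s / 4 : ℤ) : ℝ) := by exact_mod_cast h2
    linarith

/-- Every vector with integral or half-integral coordinates has integral double. -/
lemma exists_double {ι : Type} (x : ι → ℝ)
    (h : (∀ i, ∃ k : ℤ, x i = k) ∨ (∀ i, ∃ k : ℤ, x i = k + 1/2)) (i : ι) :
    ∃ k : ℤ, x i = (k : ℝ) / 2 := by
  rcases h with h | h
  · obtain ⟨k, hk⟩ := h i
    exact ⟨2 * k, by push_cast; linarith⟩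
  · obtain ⟨k, hk⟩ := h i
    exact ⟨2 * k + 1, by push_cast; linarith⟩

lemma exists_φ (x : E 16) (h : ∀ i, ∃ k : ℤ, x i = (k : ℝ) / 2) : ∃ y, φ y = x := by
  choose z hz using h
  refine ⟨fun i j => z ⟨4 * i.1 + j.1, by omega⟩, ?_⟩
  ext k
  rw [φ_app, hz]
  have : 4 * (k.1 / 4) + k.1 % 4 = k.1 := by omega
  simp only [this, Fin.eta]

lemma D16_iff (y : Fin 4 → Fin 4 → ℤ) :
    φ y ∈ setD16plus ↔ ∃ w, C1 w ∧ ∀ i, P (w i) (y i) := by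
  have hs : ∑ k, φ y k = ((∑ i, ∑ j, y i j : ℤ) : ℝ) / 2 := by
    simp only [φ_app, Fin.sum_univ_succ]
    simp [Fin.succ]
    ring
  unfold setD16plus
  rw [Set.mem_ofPred_eq, hs, sum_iff]
  simp only [φ_app]
  rw [half_iff (fun k : Fin 16 => y ⟨k.1 / 4, by omega⟩ ⟨k.1 % 4, by omega⟩)]
  constructor
  · rintro ⟨⟨p, hp, h⟩, hsum⟩
    have h' : ∀ i j, y i j % 2 = p := by
      intro i j
      have := h ⟨4 * i.1 + j.1, by omega⟩
      have h1 : (4 * i.1 + j.1) / 4 = i.1 := by omega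
      have h2 : (4 * i.1 + j.1) % 4 = j.1 := by omega
      simpa only [h1, h2, Fin.eta] using this
    choose w hw hwp using fun i => exists_P (y i) p hp (h' i)
    refine ⟨w, ?_, hw⟩
    have a0 := hwp 0
    have a1 := hwp 1
    have a2 := hwp 2
    have a3 := hwp 3
    have b0 := (hw 0).2
    have b1 := (hw 1).2
    have b2 := (hw 2).2
    have b3 := (hw 3).2
    rw [Fin.sum_univ_four] at hsum
    unfold C1
    omega
  · rintro ⟨w, ⟨c1, c2, c3, c4⟩, hw⟩
    have b0 := (hw 0).2
    have b1 := (hw 1).2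
    have b2 := (hw 2).2
    have b3 := (hw 3).2
    refine ⟨⟨(w 0).1 / 2, by omega, ?_⟩, ?_⟩
    · have hall : ∀ i, (w i).1 / 2 = (w 0).1 / 2 := by
        intro i
        fin_cases i
        · rfl
        · exact c1.symm
        · exact c2.symm
        · exact c3.symm
      intro k
      rw [← hall ⟨k.1 / 4, by omega⟩]
      exact (hw _).1 _
    · rw [Fin.sum_univ_four]
      omega

/-- The `E₈` condition for two blocks. -/
lemma E8_iff (u v : Fin 4 → ℤ) (x : Fin 8 → ℝ)
    (hu : ∀ j : Fin 4, x ⟨j.1, by omega⟩ = (u j : ℝ) / 2)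
    (hv : ∀ j : Fin 4, x ⟨j.1 + 4, by omega⟩ = (v j : ℝ) / 2) :
    E8cond x ↔ ∃ a b : Fin 4, (a.1 / 2 = b.1 / 2 ∧ (a.1 + b.1) % 2 = 0) ∧ P a u ∧ P b v := by
  have hx : x = fun k => ((Fin.append u v k : ℤ) : ℝ) / 2 := by
    funext k
    induction k using Fin.addCases (m := 4) (n := 4) with
    | left j => rw [Fin.append_left]; exact hu j
    | right j =>
      rw [Fin.append_right, ← hv j]
      congr 1
      ext
      simp
  have hs : ∑ k, x k = ((∑ j, u j + ∑ j, v j : ℤ) : ℝ) / 2 := by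
    rw [hx]
    rw [Fin.sum_univ_add (a := 4) (b := 4)]
    simp only [Fin.append_left, Fin.append_right]
    push_cast
    rw [add_div, Finset.sum_div, Finset.sum_div]
  unfold E8cond
  rw [hs, sum_iff, hx, half_iff (fun k : Fin (4 + 4) => Fin.append u v k)]
  constructor
  · rintro ⟨⟨p, hp, h⟩, hsum⟩
    obtain ⟨a, ha, hap⟩ := exists_P u p hp (fun j => by simpa only [Fin.append_left] using h (Fin.castAdd 4 j))
    obtain ⟨b, hb, hbp⟩ := exists_P v p hp (fun j => by simpa only [Fin.append_right] using h (Fin.natAdd 4 j))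
    refine ⟨a, b, ?_, ha, hb⟩
    have := ha.2
    have := hb.2
    omega
  · rintro ⟨a, b, ⟨h1, h2⟩, ha, hb⟩
    refine ⟨⟨a.1 / 2, by omega, ?_⟩, ?_⟩
    · intro k
      induction k using Fin.addCases (m := 4) (n := 4) with
      | left j => rw [Fin.append_left]; exact ha.1 j
      | right j => rw [Fin.append_right, h1]; exact hb.1 j
    · have := ha.2
      have := hb.2
      omega

lemma E8E8_iff (y : Fin 4 → Fin 4 → ℤ) :
    φ y ∈ setE8E8 ↔ ∃ w, C2 w ∧ ∀ i, P (w i) (y i) := by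
  unfold setE8E8
  rw [Set.mem_ofPred_eq, E8_iff (y 0) (y 1), E8_iff (y 2) (y 3)]
  · constructor
    · rintro ⟨⟨a, b, h, ha, hb⟩, ⟨c, d, h', hc, hd⟩⟩
      refine ⟨![a, b, c, d], ⟨h, h'⟩, ?_⟩
      intro i
      fin_cases i
      · exact ha
      · exact hb
      · exact hc
      · exact hd
    · rintro ⟨w, ⟨h, h'⟩, hw⟩
      exact ⟨⟨w 0, w 1, h, hw 0, hw 1⟩, ⟨w 2, w 3, h', hw 2, hw 3⟩⟩
  all_goals
    intro j
    fin_cases j <;> rfl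

lemma exists_of_D16 (x : E 16) (h : x ∈ setD16plus) : ∃ y, φ y = x :=
  exists_φ x (exists_double _ h.1)

lemma exists_of_E8E8 (x : E 16) (h : x ∈ setE8E8) : ∃ y, φ y = x := by
  apply exists_φ
  intro i
  by_cases hi : i.1 < 8
  · exact exists_double _ h.1.1 ⟨i.1, hi⟩
  · obtain ⟨k, hk⟩ := exists_double _ h.2.1 ⟨i.1 - 8, by omega⟩
    refine ⟨k, ?_⟩
    rw [← hk]
    have hi' : i.1 - 8 + 8 = i.1 := by omega
    simp only [hi', Fin.eta]

lemma shell_eq (L : Set (E 16)) (C : (Fin 4 → Fin 4) → Prop) (m : ℝ)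
    (h1 : ∀ x ∈ L, ∃ y, φ y = x) (h2 : ∀ y, φ y ∈ L ↔ ∃ w, C w ∧ ∀ i, P (w i) (y i)) :
    {x ∈ L | ‖x‖ ^ 2 = m} = φ '' Sh C (4 * m) := by
  ext x
  constructor
  · rintro ⟨hx, hm⟩
    obtain ⟨y, rfl⟩ := h1 x hx
    refine ⟨y, ⟨(h2 y).1 hx, ?_⟩, rfl⟩
    rw [φ_norm] at hm
    linarith
  · rintro ⟨y, ⟨hy, hm⟩, rfl⟩
    refine ⟨(h2 y).2 hy, ?_⟩
    rw [φ_norm]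
    linarith

end ThetaAux

/-- `D₁₆⁺` and `E₈ ⊥ E₈` have the same theta series: for every `m`, the shells of norm
`m` of the two lattices are finite and have the same cardinality. -/
theorem D16plus_E8E8_same_theta (m : ℝ) :
    {x ∈ setD16plus | ‖x‖ ^ 2 = m}.Finite ∧
    {x ∈ setE8E8 | ‖x‖ ^ 2 = m}.Finite ∧
    {x ∈ setD16plus | ‖x‖ ^ 2 = m}.ncard = {x ∈ setE8E8 | ‖x‖ ^ 2 = m}.ncard := by
  rw [ThetaAux.shell_eq _ ThetaAux.C1 m ThetaAux.exists_of_D16 ThetaAux.D16_iff,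
    ThetaAux.shell_eq _ ThetaAux.C2 m ThetaAux.exists_of_E8E8 ThetaAux.E8E8_iff]
  refine ⟨(ThetaAux.Sh_finite _ _).image _, (ThetaAux.Sh_finite _ _).image _, ?_⟩
  rw [Set.ncard_image_of_injective _ ThetaAux.φ_inj, Set.ncard_image_of_injective _ ThetaAux.φ_inj,
    ThetaAux.Sh_ncard]
end
end
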